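/- arXiv:2010.06754 — 2 statements merged into one kernel-verified Lean document; each statement's English description precedes it below -/
import Mathlib

section
/- There exist a constant c > 0 and an integer m₁ ≥ 3 such that the following holds: if (D, Ω) is a solution of the rotating patch equation with |D| = π and D is m-fold symmetric for some integer m ≥ m₁, then sup_{x ∈ ∂D} |x| − 1 ≤ c/m. -/
/-!
The bound comes from comparing the potential of `D` with that of its circular average.

Identify `ℝ²` with `ℂ`. By `m`-fold symmetry, averaging `log |x - y|` over the rotations of `D`
and using `∏_ζ (x - ζ y) = x ^ m - y ^ m` gives
`∫_D log |x - y| dy = (1 / m) ∫_D log |x ^ m - y ^ m| dy`. The integrand differs from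
`m log max(|x|, |y|)` by `log |1 - w ^ m|` with `|w| = min(|x|, |y|) / max(|x|, |y|)`. This function
has mean zero on circles by harmonicity and is at most `|w| ^ m`, so its `L¹` norm on a circle is
at most `4 π |w| ^ m`. Integrating over the radii (`lintegral_logDefect_le`) shows that the
potential at `x` equals the radial function `Φ(|x|) = ∫_D log max(|x|, |y|) dy` up to an error of
at most `16 π |x|² / m²` (`abs_potential_sub_radial_le`).

The origin lies in `D` (`zero_mem_of_rotation_invariant`): otherwise `D` carries a continuous branch
of the logarithm, which a rotation by `2π / m` would shift by a constant `2πi / m + 2πi k`;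
iterating `m` times gives `1 + m k = 0`.

Let `a` be the least modulus on `∂D`, so that the disc of radius `a` lies in `D` and `a ≤ 1`, and
let `b` be the modulus of any boundary point. Since `∂D` is connected, all moduli in `[a, b]` occur
on it. With `δ = 1 / m`, if `b < a (1 + δ)` the claim is immediate. Otherwise the boundary condition
at the moduli `a` and `a (1 + δ)`, together with `Φ(a (1 + δ)) - Φ(a) ≥ π a² log (1 + δ)`, forces
`2 Ω ≥ 1 - O(δ)`; at the moduli `b / (1 + δ)` and `b`, together with
`Φ(b) - Φ(b / (1 + δ)) ≤ |D| log (1 + δ) = π log (1 + δ)`, it forces `2 Ω ≤ 1 / b² + O(δ)`.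
Hence `b ≤ 1 + O(δ)`.
-/


open MeasureTheory Set Real Bornology

noncomputable section

/-- The plane `ℝ²`. -/
abbrev R2 : Type := EuclideanSpace ℝ (Fin 2)

/-- The point of `ℝ²` with given coordinates. -/
def pt (a b : ℝ) : R2 := (EuclideanSpace.equiv (Fin 2) ℝ).symm ![a, b]

/-- The 2D Newtonian potential kernel `N(x) = (1/(2π)) log |x|`. -/
def nker (x : R2) : ℝ := (1 / (2 * π)) * Real.log ‖x‖

/-- The convolution `1_D * N`. -/
def patchConv (D : Set R2) (x : R2) : ℝ := ∫ y in D, nker (x - y)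

/-- The relative stream function `Ψ(x) = (1_D * N)(x) − (Ω/2)|x|²`. -/
def streamFun (D : Set R2) (Ω : ℝ) (x : R2) : ℝ := patchConv D x - Ω / 2 * ‖x‖ ^ 2

/-- `(D, Ω)` is a solution of the rotating patch equation: `D` is a bounded open
simply connected set whose boundary is a `C²` Jordan curve, and `Ψ` is constant
on `∂D`. -/
def IsPatchSolution (D : Set R2) (Ω : ℝ) : Prop :=
  IsOpen D ∧ IsBounded D ∧ SimplyConnectedSpace D ∧
  (∃ γ : ℝ → R2,
      ContDiff ℝ 2 γ ∧ Function.Periodic γ (2 * π) ∧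
      Set.InjOn γ (Set.Ico 0 (2 * π)) ∧ (∀ t, deriv γ t ≠ 0) ∧
      Set.range γ = frontier D) ∧
  (∃ c : ℝ, ∀ x ∈ frontier D, streamFun D Ω x = c)

/-- Rotation of the plane by angle `α` about the origin. -/
def rot (α : ℝ) (x : R2) : R2 :=
  pt (Real.cos α * x 0 - Real.sin α * x 1) (Real.sin α * x 0 + Real.cos α * x 1)

/-- `D` is `m`-fold symmetric. -/
def MFoldSymmetric (m : ℕ) (D : Set R2) : Prop := rot (2 * π / m) '' D = D

/-- Polar coordinates point `r(cos θ, sin θ)`. -/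
def polar (r θ : ℝ) : R2 := pt (r * Real.cos θ) (r * Real.sin θ)

/-- The star-shaped domain with polar graph boundary `1 + u`. -/
def polarDomain (u : ℝ → ℝ) : Set R2 :=
  {x | ∃ r θ : ℝ, 0 ≤ r ∧ r < 1 + u θ ∧ x = polar r θ}

/-- The polar graph `{(1+u(θ))(cos θ, sin θ)}`. -/
def polarGraph (u : ℝ → ℝ) : Set R2 := {x | ∃ θ : ℝ, x = polar (1 + u θ) θ}

/-- `L^∞` norm of a (continuous periodic) function on the torus. -/
def supNorm (u : ℝ → ℝ) : ℝ := ⨆ θ : ℝ, |u θ|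

/-- The Fraenkel asymmetry. -/
def fraenkel (D : Set R2) : ℝ :=
  sInf (Set.range fun x : R2 =>
    (volume (symmDiff D (Metric.ball x (Real.sqrt ((volume D).toReal / π))))).toReal
      / (volume D).toReal)

/-- Asymmetry with respect to the unit disk centered at the origin. -/
def asym0 (D : Set R2) : ℝ :=
  (volume (symmDiff D (Metric.ball (0 : R2) 1))).toReal / π

/-- The Laplacian in the plane. -/
def lap (p : R2 → ℝ) (x : R2) : ℝ :=
  ∑ i : Fin 2,
    fderiv ℝ (fun y => fderiv ℝ p y (EuclideanSpace.single i 1)) x (EuclideanSpace.single i 1)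

/-- The radial function `g(r) = ℋ¹(∂B_r ∩ D)/(2πr)`, as a function on the plane. -/
def sliceg (D : Set R2) (y : R2) : ℝ :=
  (μH[1] (Metric.sphere (0 : R2) ‖y‖ ∩ D)).toReal / (2 * π * ‖y‖)

/-- Convolution of `f` with the Newtonian potential over the plane. -/
def convN (f : R2 → ℝ) (x : R2) : ℝ := ∫ y, f y * nker (x - y)


/-! ### The origin belongs to a rotation-invariant simply connected set -/

/-- If `0 ∉ D`, a continuous logarithm on `D` would change by the constant
`2πi / m + 2πi k` under each of the `m` rotations that compose to the identity, which is
impossible for `m ≥ 2`. -/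
lemma zero_mem_of_rotation_invariant {D : Set ℂ} (hsc : IsSimplyConnected D) (ho : IsOpen D)
    {m : ℕ} (hm : 2 ≤ m) (hrot : ∀ z ∈ D, Complex.exp (2 * π * Complex.I / m) * z ∈ D) :
    (0 : ℂ) ∈ D := by
  by_contra h0
  obtain ⟨f, hfc, hf⟩ := Complex.exists_continuousOn_eqOn_exp_comp hsc ho
    (g := fun z => z) continuousOn_id (by simpa using h0)
  have hm0 : (m : ℂ) ≠ 0 := by exact_mod_cast (by omega : m ≠ 0)
  have hpi : (2 * π * Complex.I : ℂ) ≠ 0 := Complex.two_pi_I_ne_zero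
  set ω : ℂ := Complex.exp (2 * π * Complex.I / m) with hω
  -- The integer by which the change of `f` under one rotation differs from `2πi / m`, in units
  -- of `2πi`; being continuous, it is constant on `D`.
  set q : ℂ → ℝ := fun z => ((f (ω * z) - f z - 2 * π * Complex.I / m) / (2 * π * Complex.I)).re
    with hq
  have hint : ∀ z ∈ D, ∃ k : ℤ, f (ω * z) = f z + 2 * π * Complex.I / m
      + k * (2 * π * Complex.I) := by
    intro z hz
    have h1 : Complex.exp (f (ω * z)) = ω * z := hf (hrot z hz)
    have h2 : Complex.exp (f z) = z := hf hz
    rw [← Complex.exp_eq_exp_iff_exists_int, Complex.exp_add, h1, h2, mul_comm]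
  have hqk : ∀ z ∈ D, ∀ k : ℤ, f (ω * z) = f z + 2 * π * Complex.I / m
      + k * (2 * π * Complex.I) → q z = k := by
    intro z hz k hk
    simp only [hq, hk]
    rw [show (f z + 2 * π * Complex.I / m + k * (2 * π * Complex.I) - f z
      - 2 * π * Complex.I / m) / (2 * π * Complex.I) = (k : ℂ) by field_simp; ring]
    simp
  have hqc : ContinuousOn q D := by
    have : ContinuousOn (fun z => f (ω * z)) D :=
      hfc.comp (by fun_prop) (fun z hz => hrot z hz)
    simp only [hq]
    refine Complex.continuous_re.comp_continuousOn ?_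
    exact ((this.sub hfc).sub continuousOn_const).div_const _
  obtain ⟨z₀, hz₀⟩ := hsc.nonempty
  obtain ⟨k, hk⟩ := hint z₀ hz₀
  have hdisc : DiscreteTopology (range ((↑) : ℤ → ℝ)) := by
    exact Int.isClosedEmbedding_coe_real.isEmbedding.toHomeomorph.symm.isEmbedding.discreteTopology
  have hconst : ∀ z ∈ D, f (ω * z) = f z + 2 * π * Complex.I / m + k * (2 * π * Complex.I) := by
    intro z hz
    obtain ⟨l, hl⟩ := hint z hz
    have := hsc.isPathConnected.isConnected.isPreconnected.constant_of_mapsTo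
      (T := range ((↑) : ℤ → ℝ)) ⟨hdisc⟩ hqc
      (fun w hw => by obtain ⟨j, hj⟩ := hint w hw; exact ⟨j, (hqk w hw j hj).symm⟩) hz hz₀
    rw [hqk z hz l hl, hqk z₀ hz₀ k hk] at this
    have : l = k := by exact_mod_cast this
    rw [← this]; exact hl
  have hiter : ∀ n : ℕ, ω ^ n * z₀ ∈ D ∧
      f (ω ^ n * z₀) = f z₀ + n * (2 * π * Complex.I / m + k * (2 * π * Complex.I)) := by
    intro n
    induction n with
    | zero => simp [hz₀]
    | succ n ih =>
      rw [show ω ^ (n + 1) * z₀ = ω * (ω ^ n * z₀) by ring]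
      refine ⟨hrot _ ih.1, ?_⟩
      rw [hconst _ ih.1, ih.2]; push_cast; ring
  have h1 := (hiter m).2
  have hωm : ω ^ m = 1 := by
    rw [hω, ← Complex.exp_nat_mul, mul_div_cancel₀ _ hm0, Complex.exp_two_pi_mul_I]
  rw [hωm, one_mul] at h1
  have h2 : (2 * π * Complex.I) * (1 + m * k : ℂ) = 0 := by
    have : (m : ℂ) * (2 * π * Complex.I / m + k * (2 * π * Complex.I)) = 0 := by
      linear_combination -h1
    rw [← this]; field_simp
  have h3 : (1 + m * k : ℂ) = 0 := (mul_eq_zero.1 h2).resolve_left hpi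
  have h4 : (1 + m * k : ℤ) = 0 := by exact_mod_cast h3
  have h5 : (m : ℤ) ∣ 1 := ⟨-k, by linarith⟩
  have := Int.le_of_dvd one_pos h5
  omega

/-! ### Logarithmic means on circles -/

/-- The function `θ ↦ log |1 - (a e^{iθ})^m|` has mean zero (harmonicity) and is at most `|a| ^ m`,
which controls its `L¹` norm. -/
lemma lintegral_abs_log_one_sub_pow_le {a : ℂ} (ha : ‖a‖ < 1) {m : ℕ} (hm : m ≠ 0) :
    ∫⁻ θ in Ioo (-π) π, ENNReal.ofReal |Real.log ‖1 - (a * Complex.exp (θ * Complex.I)) ^ m‖|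
      ≤ ENNReal.ofReal (4 * π * ‖a‖ ^ m) := by
  have hlt : ∀ z : ℂ, ‖z‖ ≤ 1 → ‖(a * z) ^ m‖ < 1 := by
    intro z hz
    rw [norm_pow, norm_mul]
    exact pow_lt_one₀ (by positivity) (by nlinarith [norm_nonneg a]) hm
  have hne : ∀ z : ℂ, ‖z‖ ≤ 1 → 1 - (a * z) ^ m ≠ 0 := by
    intro z hz h
    have h1 := hlt z hz
    rw [← sub_eq_zero.1 h] at h1
    simp at h1
  have hexp : ∀ θ : ℝ, ‖Complex.exp (θ * Complex.I)‖ ≤ 1 :=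
    fun θ => (Complex.norm_exp_ofReal_mul_I θ).le
  set g : ℝ → ℝ := fun θ => Real.log ‖1 - (a * Complex.exp (θ * Complex.I)) ^ m‖ with hg
  have hgc : Continuous g := by
    simp only [hg]
    exact Continuous.log (by fun_prop) (fun θ => norm_ne_zero_iff.2 (hne _ (hexp θ)))
  have havg : Real.circleAverage (fun z : ℂ => Real.log ‖1 - (a * z) ^ m‖) 0 1 = 0 := by
    rw [InnerProductSpace.HarmonicOnNhd.circleAverage_eq]
    · simp [hm]
    · intro z hz
      exact AnalyticAt.harmonicAt_log_norm (by fun_prop) (hne z (by simpa using hz))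
  have hint0 : ∫ θ in (0 : ℝ)..2 * π, g θ = 0 := by
    rw [Real.circleAverage_def] at havg
    have := (smul_eq_zero.1 havg).resolve_left (by positivity)
    simpa [circleMap, hg] using this
  have hper : Function.Periodic g (2 * π) := by
    intro θ
    simp only [hg]
    congr 5
    push_cast
    rw [add_mul, Complex.exp_periodic]
  have hint : ∫ θ in (-π)..π, g θ = 0 := by
    have := hper.intervalIntegral_add_eq (-π) 0
    rw [zero_add, hint0] at this
    rw [← this]; congr 1; ring
  have hub : ∀ θ, g θ ≤ ‖a‖ ^ m := by
    intro θ
    have h1 : ‖1 - (a * Complex.exp (θ * Complex.I)) ^ m‖ ≤ 1 + ‖a‖ ^ m := by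
      refine (norm_sub_le _ _).trans ?_
      rw [norm_one, norm_pow, norm_mul, Complex.norm_exp_ofReal_mul_I, mul_one]
    have h2 := Real.log_le_sub_one_of_pos (norm_pos_iff.2 (hne _ (hexp θ)))
    simp only [hg]; linarith
  have hpi : -π ≤ π := by linarith [Real.pi_pos]
  have hs : 0 ≤ ‖a‖ ^ m := by positivity
  calc ∫⁻ θ in Ioo (-π) π, ENNReal.ofReal |g θ|
      ≤ ∫⁻ θ in Ioo (-π) π, ENNReal.ofReal (2 * ‖a‖ ^ m - g θ) := by
        refine lintegral_mono fun θ => ENNReal.ofReal_le_ofReal ?_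
        have := hub θ
        rw [abs_le]; constructor <;> linarith
    _ = ENNReal.ofReal (∫ θ in Ioo (-π) π, (2 * ‖a‖ ^ m - g θ)) := by
        rw [ofReal_integral_eq_lintegral_ofReal]
        · exact ((continuous_const.sub hgc).integrableOn_Icc).mono_set Ioo_subset_Icc_self
        · exact Filter.Eventually.of_forall fun θ => by
            have := hub θ
            show 0 ≤ 2 * ‖a‖ ^ m - g θ
            linarith
    _ ≤ ENNReal.ofReal (4 * π * ‖a‖ ^ m) := by
        apply ENNReal.ofReal_le_ofReal
        rw [← integral_Ioc_eq_integral_Ioo, ← intervalIntegral.integral_of_le hpi,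
          intervalIntegral.integral_sub (by simp) (hgc.intervalIntegrable _ _), hint]
        simp; linarith

/-- The difference between `log |x ^ m - y ^ m|` and the radial function
`m log max(|x|, |y|)` that approximates it. -/
def logDefect (m : ℕ) (x y : ℂ) : ℝ :=
  Real.log ‖x ^ m - y ^ m‖ - m * Real.log (max ‖x‖ ‖y‖)

lemma measurable_logDefect (m : ℕ) (x : ℂ) : Measurable (logDefect m x) := by
  unfold logDefect
  fun_prop

lemma log_norm_pow_sub_pow {m : ℕ} {u v : ℂ} (huv : ‖v‖ < ‖u‖) (hm : m ≠ 0) :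
    Real.log ‖u ^ m - v ^ m‖ - m * Real.log ‖u‖ = Real.log ‖1 - (v / u) ^ m‖ := by
  have hu : 0 < ‖u‖ := (norm_nonneg v).trans_lt huv
  have hu0 : u ≠ 0 := norm_pos_iff.1 hu
  have h1 : u ^ m - v ^ m = u ^ m * (1 - (v / u) ^ m) := by
    rw [div_pow]; field_simp
  have h2 : ‖1 - (v / u) ^ m‖ ≠ 0 := by
    intro h
    have h3 : (v / u) ^ m = 1 := (sub_eq_zero.1 (norm_eq_zero.1 h)).symm
    have h4 : ‖(v / u) ^ m‖ < 1 := by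
      rw [norm_pow, norm_div]
      exact pow_lt_one₀ (by positivity) ((div_lt_one hu).2 huv) hm
    rw [h3] at h4; simp at h4
  rw [h1, norm_mul, norm_pow, Real.log_mul (by positivity) h2, Real.log_pow]; ring

/-- For `r > |x|` the roles of `x` and `y` are exchanged by complex conjugation, which turns
`x / (r e^{iθ})` into `(conj x / r) e^{iθ}`. -/
lemma lintegral_circle_logDefect_le {m : ℕ} (hm : m ≠ 0) {x : ℂ} (hx : x ≠ 0) {r : ℝ}
    (hr : 0 < r) (hrx : r ≠ ‖x‖) :
    ∫⁻ θ in Ioo (-π) π, ENNReal.ofReal |logDefect m x (r * Complex.exp (θ * Complex.I))|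
      ≤ ENNReal.ofReal (4 * π * (min ‖x‖ r / max ‖x‖ r) ^ m) := by
  have hxp : 0 < ‖x‖ := norm_pos_iff.2 hx
  have hn : ∀ θ : ℝ, ‖(r * Complex.exp (θ * Complex.I) : ℂ)‖ = r := by
    intro θ
    rw [norm_mul, Complex.norm_exp_ofReal_mul_I, mul_one, Complex.norm_real,
      Real.norm_of_nonneg hr.le]
  rcases lt_or_gt_of_ne hrx with h | h
  · have ha : ‖(r : ℂ) / x‖ = r / ‖x‖ := by
      rw [norm_div, Complex.norm_real, Real.norm_of_nonneg hr.le]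
    have := lintegral_abs_log_one_sub_pow_le (a := r / x) (by rw [ha]; exact (div_lt_one hxp).2 h) hm
    rw [ha] at this
    rw [min_eq_right h.le, max_eq_left h.le]
    convert this using 5 with θ
    rw [logDefect, hn, max_eq_left h.le, log_norm_pow_sub_pow (by rw [hn]; exact h) hm]
    congr 4
    ring
  · have ha : ‖(starRingEnd ℂ x) / r‖ = ‖x‖ / r := by
      rw [norm_div, Complex.norm_real, Real.norm_of_nonneg hr.le, Complex.norm_conj]
    have := lintegral_abs_log_one_sub_pow_le (a := (starRingEnd ℂ x) / r)
      (by rw [ha]; exact (div_lt_one hr).2 h) hm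
    rw [ha] at this
    rw [min_eq_left h.le, max_eq_right h.le]
    convert this using 5 with θ
    have h1 := log_norm_pow_sub_pow (u := r * Complex.exp (θ * Complex.I)) (v := x)
      (by rw [hn]; exact h) hm
    rw [hn] at h1
    rw [logDefect, hn, max_eq_right h.le, norm_sub_rev, h1, ← Complex.norm_conj]
    congr 2
    simp only [map_sub, map_one, map_pow, map_div₀, map_mul, Complex.conj_ofReal, ← Complex.exp_conj,
      Complex.conj_I, mul_neg, Complex.exp_neg]
    congr 2
    have : Complex.exp (θ * Complex.I) ≠ 0 := Complex.exp_ne_zero _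
    field_simp

/-- The two ranges `r ≤ R` and `r > R` contribute `4 π R² / (m + 2)` and `4 π R² / (m - 2)`. -/
lemma lintegral_radial_le {m : ℕ} (hm : 3 ≤ m) {R : ℝ} (hR : 0 < R) :
    ∫⁻ r in Ioi (0 : ℝ), ENNReal.ofReal (r * (4 * π * (min R r / max R r) ^ m))
      ≤ ENNReal.ofReal (16 * π * R ^ 2 / m) := by
  have hm3 : (3 : ℝ) ≤ m := by exact_mod_cast hm
  have hpi := Real.pi_pos
  have h1 : ∫⁻ r in Ioc (0 : ℝ) R, ENNReal.ofReal (r * (4 * π * (min R r / max R r) ^ m))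
      = ENNReal.ofReal (4 * π * R ^ 2 / (m + 2)) := by
    have e : ∫⁻ r in Ioc (0 : ℝ) R, ENNReal.ofReal (r * (4 * π * (min R r / max R r) ^ m))
      = ∫⁻ r in Ioc (0 : ℝ) R, ENNReal.ofReal (4 * π / R ^ m * r ^ (m + 1)) := by
      refine setLIntegral_congr_fun measurableSet_Ioc fun r hr => ?_
      simp only [min_eq_right hr.2, max_eq_left hr.2, div_pow]
      congr 1; field_simp; ring
    rw [e, ← ofReal_integral_eq_lintegral_ofReal]
    · congr 1
      rw [← intervalIntegral.integral_of_le hR.le, intervalIntegral.integral_const_mul,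
        integral_pow]
      push_cast
      field_simp
      ring
    · exact (Continuous.integrableOn_Icc (by fun_prop)).mono_set Ioc_subset_Icc_self
    · refine (ae_restrict_iff' measurableSet_Ioc).2 (.of_forall fun r hr => ?_)
      have := hr.1
      show 0 ≤ _
      positivity
  have hlt : (1 - m : ℝ) < -1 := by linarith
  have h2 : ∫⁻ r in Ioi R, ENNReal.ofReal (r * (4 * π * (min R r / max R r) ^ m))
      = ENNReal.ofReal (4 * π * R ^ 2 / (m - 2)) := by
    have e : ∫⁻ r in Ioi R, ENNReal.ofReal (r * (4 * π * (min R r / max R r) ^ m))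
      = ∫⁻ r in Ioi R, ENNReal.ofReal (4 * π * R ^ m * r ^ (1 - m : ℝ)) := by
      refine setLIntegral_congr_fun measurableSet_Ioi fun r (hr : R < r) => ?_
      have hr0 : 0 < r := hR.trans hr
      simp only [min_eq_left hr.le, max_eq_right hr.le, div_pow]
      rw [Real.rpow_sub hr0, Real.rpow_one, Real.rpow_natCast]
      congr 1; field_simp
    rw [e, ← ofReal_integral_eq_lintegral_ofReal]
    · congr 1
      rw [integral_const_mul, integral_Ioi_rpow_of_lt hlt hR,
        show (1 - m + 1 : ℝ) = 2 - m by ring, Real.rpow_sub hR, Real.rpow_natCast]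
      have : (2 - m : ℝ) ≠ 0 := by linarith
      have : (m - 2 : ℝ) ≠ 0 := by linarith
      norm_num
      field_simp
      ring
    · exact (integrableOn_Ioi_rpow_of_lt hlt hR).const_mul _
    · refine (ae_restrict_iff' measurableSet_Ioi).2 (.of_forall fun r (hr : R < r) => ?_)
      have := hR.trans hr
      show 0 ≤ _
      positivity
  rw [← Ioc_union_Ioi_eq_Ioi hR.le, lintegral_union measurableSet_Ioi
    (Set.disjoint_left.2 fun r hr hr' => not_lt.2 hr.2 hr'), h1, h2,
    ← ENNReal.ofReal_add (by positivity) (div_nonneg (by positivity) (by linarith))]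
  apply ENNReal.ofReal_le_ofReal
  have hm2 : (0 : ℝ) < m - 2 := by linarith
  rw [div_add_div _ _ (by positivity) hm2.ne', div_le_div_iff₀ (by positivity) (by positivity)]
  have : 0 ≤ 8 * π * R ^ 2 * ((m : ℝ) ^ 2 - 8) := by
    apply mul_nonneg (by positivity); nlinarith
  nlinarith

/-- The `L¹` estimate of the defect over the whole plane, in polar coordinates. -/
lemma lintegral_logDefect_le {m : ℕ} (hm : 3 ≤ m) {x : ℂ} (hx : x ≠ 0) :
    ∫⁻ y : ℂ, ENNReal.ofReal |logDefect m x y| ≤ ENNReal.ofReal (16 * π * ‖x‖ ^ 2 / m) := by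
  have hmeas : Measurable fun y => ENNReal.ofReal |logDefect m x y| :=
    (measurable_logDefect m x).norm.ennreal_ofReal
  have hcast : ∀ p : ℝ × ℝ, Complex.polarCoord.symm p = p.1 * Complex.exp (p.2 * Complex.I) := by
    intro p
    rw [Complex.polarCoord_symm_apply, Complex.exp_mul_I]; push_cast; rfl
  rw [← Complex.lintegral_comp_polarCoord_symm, polarCoord_target, Measure.volume_eq_prod,
    ← Measure.prod_restrict, lintegral_prod]
  · refine le_trans ?_ (lintegral_radial_le hm (norm_pos_iff.2 hx))
    refine lintegral_mono_ae ?_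
    have hne : ∀ᵐ r : ℝ, r ≠ ‖x‖ := by
      simpa using (Set.countable_singleton ‖x‖).ae_notMem volume
    filter_upwards [ae_restrict_mem measurableSet_Ioi, ae_restrict_of_ae hne] with r hr hrx
    have hr : 0 < r := hr
    simp only [hcast, smul_eq_mul]
    rw [lintegral_const_mul, ENNReal.ofReal_mul hr.le]
    · gcongr
      exact lintegral_circle_logDefect_le (by omega) hx hr hrx
    · exact hmeas.comp (by fun_prop)
  · simp only [hcast, smul_eq_mul]
    apply Measurable.aemeasurable
    exact (by fun_prop : Measurable fun p : ℝ × ℝ => ENNReal.ofReal p.1).mul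
      (hmeas.comp (by fun_prop))

lemma integrable_logDefect {m : ℕ} (hm : 3 ≤ m) {x : ℂ} (hx : x ≠ 0) :
    Integrable (logDefect m x) := by
  refine ⟨(measurable_logDefect m x).aestronglyMeasurable, ?_⟩
  rw [hasFiniteIntegral_iff_norm]
  exact (lintegral_logDefect_le hm hx).trans_lt ENNReal.ofReal_lt_top

lemma abs_setIntegral_logDefect_le {m : ℕ} (hm : 3 ≤ m) {x : ℂ} (hx : x ≠ 0) (D : Set ℂ) :
    |∫ y in D, logDefect m x y| ≤ 16 * π * ‖x‖ ^ 2 / m := by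
  have hi := integrable_logDefect hm hx
  calc |∫ y in D, logDefect m x y| ≤ ∫ y in D, |logDefect m x y| := abs_integral_le_integral_abs
    _ ≤ ∫ y, |logDefect m x y| :=
        setIntegral_le_integral hi.abs (.of_forall fun y => abs_nonneg _)
    _ ≤ 16 * π * ‖x‖ ^ 2 / m := by
        rw [← ENNReal.ofReal_le_ofReal_iff (by positivity),
          ofReal_integral_eq_lintegral_ofReal hi.abs (.of_forall fun y => abs_nonneg _)]
        exact lintegral_logDefect_le hm hx

/-! ### The potential of a symmetric set is nearly radial -/

lemma integrableOn_log_norm_sub {D : Set ℂ} (hb : IsBounded D) (hD : MeasurableSet D) (x : ℂ) :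
    IntegrableOn (fun y => Real.log ‖x - y‖) D := by
  obtain ⟨R, hR⟩ := hb.subset_ball x
  have h1 : IntegrableOn (fun z : ℂ => Real.log ‖z‖) (Metric.ball 0 R) := by
    rw [integrableOn_fun_norm_addHaar]
    simp only [Complex.finrank_real_complex, Nat.add_one_sub_one, pow_one, smul_eq_mul]
    exact Real.continuous_mul_log.integrableOn_Icc.mono_set Ioo_subset_Icc_self
  rw [← integrable_indicator_iff measurableSet_ball] at h1
  refine ((h1.comp_sub_right x).integrableOn (s := D)).congr_fun (fun y hy => ?_) hD
  have : y - x ∈ Metric.ball (0 : ℂ) R := by simpa [dist_eq_norm] using hR hy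
  simp only [indicator_of_mem this, norm_sub_rev]

lemma setIntegral_log_norm_sub_root_mul {D : Set ℂ} {ζ : ℂ} (hζ : ‖ζ‖ = 1)
    (hinv : ∀ z, ζ * z ∈ D ↔ z ∈ D) (x : ℂ) :
    ∫ y in D, Real.log ‖x - ζ * y‖ = ∫ y in D, Real.log ‖x - y‖ := by
  obtain ⟨u, rfl⟩ : ∃ u : Circle, (u : ℂ) = ζ := ⟨⟨ζ, mem_sphere_zero_iff_norm.2 hζ⟩, rfl⟩
  have hpre : rotation u ⁻¹' D = D := by
    ext z; simpa [rotation_apply] using hinv z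
  have := (rotation u).measurePreserving.setIntegral_preimage_emb
    (rotation u).toHomeomorph.measurableEmbedding (fun y => Real.log ‖x - y‖) D
  rw [← this, hpre]
  simp [rotation_apply]

lemma integrableOn_log_max {D : Set ℂ} (hb : IsBounded D) {r : ℝ} (hr : 0 < r) :
    IntegrableOn (fun y : ℂ => Real.log (max r ‖y‖)) D := by
  have hc : Continuous fun y : ℂ => Real.log (max r ‖y‖) :=
    Continuous.log (by fun_prop) fun y => (lt_max_of_lt_left hr).ne'
  exact (hc.continuousOn.integrableOn_compact hb.isCompact_closure).mono_set subset_closure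

/-- Averaging over the `m`-th roots of unity turns `log |x - y|` into `log |x ^ m - y ^ m| / m`, so
the potential differs from its radial model by `1 / m` times the integral of the defect. -/
lemma abs_potential_sub_radial_le {D : Set ℂ} (hb : IsBounded D) (hD : MeasurableSet D)
    {m : ℕ} (hm : 3 ≤ m) (hinv : ∀ ζ : ℂ, ζ ^ m = 1 → ∀ z, ζ * z ∈ D ↔ z ∈ D)
    {x : ℂ} (hx : x ≠ 0) :
    |(∫ y in D, Real.log ‖x - y‖) - ∫ y in D, Real.log (max ‖x‖ ‖y‖)|
      ≤ 16 * π * ‖x‖ ^ 2 / m ^ 2 := by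
  have hm0 : m ≠ 0 := by omega
  have hmp : (0 : ℝ) < m := by positivity
  have hprim := Complex.isPrimitiveRoot_exp m hm0
  set S := Polynomial.nthRootsFinset m (1 : ℂ) with hS
  have hroot : ∀ ζ ∈ S, ζ ^ m = 1 := fun ζ hζ => (Polynomial.mem_nthRootsFinset (by omega) _).1 hζ
  have hnorm : ∀ ζ ∈ S, ‖ζ‖ = 1 := fun ζ hζ => Complex.norm_eq_one_of_pow_eq_one (hroot ζ hζ) hm0
  have hint : ∀ ζ ∈ S, IntegrableOn (fun y => Real.log ‖x - ζ * y‖) D := by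
    intro ζ hζ
    have hζ0 : ζ ≠ 0 := norm_ne_zero_iff.1 (by rw [hnorm ζ hζ]; exact one_ne_zero)
    refine (integrableOn_log_norm_sub hb hD (x / ζ)).congr_fun (fun y _ => ?_) hD
    have : x - ζ * y = ζ * (x / ζ - y) := by field_simp
    simp only [this, norm_mul, hnorm ζ hζ, one_mul]
  have hsum : ∫ y in D, Real.log ‖x ^ m - y ^ m‖ = m * ∫ y in D, Real.log ‖x - y‖ := by
    -- Off the finitely many zeros of the factors, `log` of the product is the sum of the `log`s;
    -- the convention `log 0 = 0` breaks this at the zeros.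
    have hfin : ∀ᵐ y : ℂ, y ∉ (fun ζ => x / ζ) '' (S : Set ℂ) :=
      (S.finite_toSet.image _).countable.ae_notMem volume
    calc ∫ y in D, Real.log ‖x ^ m - y ^ m‖ = ∫ y in D, ∑ ζ ∈ S, Real.log ‖x - ζ * y‖ := by
          refine integral_congr_ae ?_
          filter_upwards [ae_restrict_of_ae hfin] with y hy
          rw [hprim.pow_sub_pow_eq_prod_sub_mul x y (by omega), norm_prod, Real.log_prod]
          intro ζ hζ h
          have hζ0 : ζ ≠ 0 := norm_ne_zero_iff.1 (by rw [hnorm ζ hζ]; exact one_ne_zero)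
          refine hy ⟨ζ, hζ, ?_⟩
          have := sub_eq_zero.1 (norm_eq_zero.1 h)
          simp only [this]; field_simp
      _ = ∑ ζ ∈ S, ∫ y in D, Real.log ‖x - ζ * y‖ := integral_finsetSum _ hint
      _ = ∑ ζ ∈ S, ∫ y in D, Real.log ‖x - y‖ := Finset.sum_congr rfl fun ζ hζ =>
          setIntegral_log_norm_sub_root_mul (hnorm ζ hζ) (hinv ζ (hroot ζ hζ)) x
      _ = m * ∫ y in D, Real.log ‖x - y‖ := by
          rw [Finset.sum_const, hS, hprim.card_nthRootsFinset, nsmul_eq_mul]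
  have hsplit : ∫ y in D, Real.log ‖x ^ m - y ^ m‖
      = (∫ y in D, logDefect m x y) + m * ∫ y in D, Real.log (max ‖x‖ ‖y‖) := by
    rw [← integral_const_mul, ← integral_add (integrable_logDefect hm hx).integrableOn
      ((integrableOn_log_max hb (norm_pos_iff.2 hx)).const_mul _)]
    simp [logDefect]
  have hle := abs_setIntegral_logDefect_le hm hx D
  have heq : (∫ y in D, Real.log ‖x - y‖) - ∫ y in D, Real.log (max ‖x‖ ‖y‖)
      = (∫ y in D, logDefect m x y) / m := by
    field_simp; linarith
  rw [heq, abs_div, abs_of_pos hmp, div_le_iff₀ hmp]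
  calc _ ≤ _ := hle
    _ = _ := by field_simp

/-! ### Increments of the radial potential -/

lemma radial_increment_le {D : Set ℂ} (hb : IsBounded D) (hvol : volume D = ENNReal.ofReal π)
    {r s : ℝ} (hr : 0 < r) (hs : 1 ≤ s) :
    (∫ y in D, Real.log (max (r * s) ‖y‖)) - ∫ y in D, Real.log (max r ‖y‖)
      ≤ π * Real.log s := by
  have hs0 : 0 < s := by linarith
  rw [← integral_sub (integrableOn_log_max hb (by positivity)) (integrableOn_log_max hb hr)]
  have hc : ∫ y in D, Real.log s = π * Real.log s := by
    rw [setIntegral_const, measureReal_def, hvol, ENNReal.toReal_ofReal Real.pi_pos.le, smul_eq_mul]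
  rw [← hc]
  refine integral_mono ((integrableOn_log_max hb (by positivity)).sub (integrableOn_log_max hb hr))
    ?_ fun y => ?_
  · exact integrableOn_const (by rw [hvol]; exact ENNReal.ofReal_ne_top)
  · have hmax : 0 < max r ‖y‖ := lt_max_of_lt_left hr
    simp only
    rw [sub_le_iff_le_add, ← Real.log_mul hs0.ne' hmax.ne']
    refine Real.log_le_log (lt_max_of_lt_left (by positivity)) (max_le ?_ ?_)
    · rw [mul_comm]; gcongr; exact le_max_left _ _
    · nlinarith [le_max_right r ‖y‖]

lemma le_radial_increment {D : Set ℂ} (hb : IsBounded D)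
    {a s : ℝ} (ha : 0 < a) (hs : 1 ≤ s) (hball : Metric.ball 0 a ⊆ D) :
    π * a ^ 2 * Real.log s ≤
      (∫ y in D, Real.log (max (a * s) ‖y‖)) - ∫ y in D, Real.log (max a ‖y‖) := by
  have hs0 : 0 < s := by linarith
  have has : a ≤ a * s := by nlinarith
  rw [← integral_sub (integrableOn_log_max hb (by positivity)) (integrableOn_log_max hb ha)]
  have hi := (integrableOn_log_max hb (by positivity : 0 < a * s)).sub (integrableOn_log_max hb ha)
  refine le_trans (le_of_eq ?_) (setIntegral_mono_set hi (.of_forall fun y => ?_)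
    (LE.le.eventuallyLE hball))
  · rw [setIntegral_congr_fun (g := fun _ => Real.log s) measurableSet_ball, setIntegral_const,
      measureReal_def, Complex.volume_ball]
    · simp only [ENNReal.toReal_mul, ENNReal.toReal_pow, ENNReal.toReal_ofReal ha.le,
        ENNReal.coe_toReal, NNReal.coe_real_pi, smul_eq_mul]
      ring
    · intro y hy
      have hy : ‖y‖ < a := by simpa using hy
      simp only [max_eq_left hy.le, max_eq_left (hy.le.trans has)]
      rw [Real.log_mul ha.ne' hs0.ne']; ring
  · simp only [Pi.zero_apply, sub_nonneg]
    exact Real.log_le_log (lt_max_of_lt_left ha) (max_le_max_right _ has)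

/-! ### The bound in the complex plane -/

lemma ball_subset_of_frontier {D : Set ℂ} (ho : IsOpen D) (h0 : (0 : ℂ) ∈ D) {a : ℝ}
    (ha : 0 < a) (hfr : ∀ x ∈ frontier D, a ≤ ‖x‖) : Metric.ball 0 a ⊆ D := by
  refine (convex_ball (0 : ℂ) a).isPreconnected.subset_left_of_subset_union ho
    isClosed_closure.isOpen_compl
    (disjoint_compl_right.mono_left subset_closure)
    (fun z hz => ?_) ⟨0, by simpa using ha, h0⟩
  by_contra h
  rw [mem_union, not_or, notMem_compl_iff] at h
  have h1 := hfr z (by rw [ho.frontier_eq]; exact ⟨h.2, h.1⟩)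
  have h2 : ‖z‖ < a := by simpa using hz
  linarith

/-- The arithmetic conclusion: `hin` bounds `Ω` from below, using boundary points near the inner
radius, and `hout` bounds it from above, using boundary points near the modulus `b`. -/
lemma final_estimate {δ b Ω L : ℝ} (hδ : 0 < δ) (hδ' : 166 * δ ≤ 1) (hb : 0 < b)
    (hL1 : δ - δ ^ 2 ≤ L) (hL2 : L ≤ δ)
    (hin : L - 48 * δ ^ 2 ≤ Ω * ((1 + δ) ^ 2 - 1))
    (hout : Ω * (b ^ 2 * ((1 + δ) ^ 2 - 1)) ≤ (1 + δ) ^ 2 * (L + 32 * b ^ 2 * δ ^ 2)) :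
    b ≤ 1 + 166 * δ := by
  by_contra! hlt
  have h1 : b ^ 2 * (δ - 49 * δ ^ 2) ≤ (1 + δ) ^ 2 * (δ + 32 * b ^ 2 * δ ^ 2) := by
    have : b ^ 2 * (L - 48 * δ ^ 2) ≤ b ^ 2 * (Ω * ((1 + δ) ^ 2 - 1)) := by gcongr
    have : b ^ 2 * (δ - 49 * δ ^ 2) ≤ b ^ 2 * (L - 48 * δ ^ 2) := 
      mul_le_mul_of_nonneg_left (by linarith) (by positivity)
    have : (1 + δ) ^ 2 * (L + 32 * b ^ 2 * δ ^ 2) ≤ (1 + δ) ^ 2 * (δ + 32 * b ^ 2 * δ ^ 2) := by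
      gcongr
    linarith
  have h2 : b ^ 2 * (1 - 49 * δ) ≤ (1 + δ) ^ 2 * (1 + 32 * b ^ 2 * δ) := by
    refine le_of_mul_le_mul_left (a := δ) ?_ hδ
    linarith
  have h3 : (1 + δ) ^ 2 ≤ 1 + 3 * δ := by nlinarith
  have h4 : (1 + δ) ^ 2 * (1 + 32 * b ^ 2 * δ) ≤ (1 + 3 * δ) * (1 + 32 * b ^ 2 * δ) := by gcongr
  have h5 : (1 + 166 * δ) ^ 2 < b ^ 2 := by gcongr
  have hb2 : 0 < b ^ 2 := by positivity
  have h6 : b ^ 2 * (1 - 82 * δ) ≤ 1 + 3 * δ := by nlinarith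
  nlinarith

/-- The bound for a patch in `ℂ`, at an arbitrary boundary point `p`. -/
theorem norm_frontier_le {m : ℕ} (hm : 166 ≤ m) {D : Set ℂ} {Ω : ℝ} (ho : IsOpen D)
    (hb : IsBounded D) (hsc : IsSimplyConnected D) (hfc : IsConnected (frontier D))
    (hvol : volume D = ENNReal.ofReal π)
    (hrot : ∀ z, Complex.exp (2 * π * Complex.I / m) * z ∈ D ↔ z ∈ D)
    {c : ℝ} (hc : ∀ x ∈ frontier D,
      1 / (2 * π) * (∫ y in D, Real.log ‖x - y‖) - Ω / 2 * ‖x‖ ^ 2 = c)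
    {p : ℂ} (hp : p ∈ frontier D) : ‖p‖ ≤ 1 + 166 / m := by
  have hpi := Real.pi_pos
  have hm0 : m ≠ 0 := by omega
  have hmR : (166 : ℝ) ≤ m := by exact_mod_cast hm
  have hmp : (0 : ℝ) < m := by linarith
  have hinv : ∀ ζ : ℂ, ζ ^ m = 1 → ∀ z, ζ * z ∈ D ↔ z ∈ D := by
    intro ζ hζ
    have : NeZero m := ⟨hm0⟩
    obtain ⟨i, -, rfl⟩ := (Complex.isPrimitiveRoot_exp m hm0).eq_pow_of_pow_eq_one hζ
    clear hζ
    induction i with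
    | zero => simp
    | succ i ih =>
      intro z
      rw [pow_succ', mul_assoc, hrot]
      exact ih z
  have h0 : (0 : ℂ) ∈ D :=
    zero_mem_of_rotation_invariant hsc ho (by omega) fun z hz => (hrot z).2 hz
  have hcomp : IsCompact (frontier D) :=
    hb.isCompact_closure.of_isClosed_subset isClosed_frontier frontier_subset_closure
  obtain ⟨q, hq, hqmin⟩ := hcomp.exists_isMinOn hfc.nonempty continuous_norm.continuousOn
  have hq0 : q ≠ 0 := by
    rintro rfl
    rw [ho.frontier_eq] at hq
    exact hq.2 h0
  have ha : 0 < ‖q‖ := norm_pos_iff.2 hq0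
  have hball : Metric.ball 0 ‖q‖ ⊆ D := ball_subset_of_frontier ho h0 ha fun x hx => hqmin hx
  have hqp : ‖q‖ ≤ ‖p‖ := hqmin hp
  have hbp : 0 < ‖p‖ := ha.trans_le hqp
  have ha1 : ‖q‖ ≤ 1 := by
    have h := measure_mono (μ := volume) hball
    rw [Complex.volume_ball, hvol, ← ENNReal.ofReal_coe_nnreal, ← ENNReal.ofReal_pow ha.le,
      ← ENNReal.ofReal_mul (by positivity), ENNReal.ofReal_le_ofReal_iff hpi.le] at h
    have : ‖q‖ ^ 2 ≤ 1 := by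
      refine le_of_mul_le_mul_right (a := π) ?_ hpi
      simpa using h
    nlinarith
  set δ : ℝ := 1 / m with hδ
  have hδ0 : 0 < δ := by positivity
  have hδ1 : 166 * δ ≤ 1 := by rw [hδ, mul_one_div, div_le_one hmp]; exact hmR
  rw [show (166 : ℝ) / m = 166 * δ by rw [hδ]; ring]
  by_cases hcase : ‖p‖ < ‖q‖ * (1 + δ)
  · nlinarith
  push Not at hcase
  have hival : ∀ t, ‖q‖ ≤ t → t ≤ ‖p‖ → ∃ x ∈ frontier D, ‖x‖ = t := by
    intro t h1 h2
    have := (hfc.isPreconnected.image _ continuous_norm.continuousOn).Icc_subset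
      (mem_image_of_mem _ hq) (mem_image_of_mem _ hp)
    exact this ⟨h1, h2⟩
  have key : ∀ x ∈ frontier D, ∃ e : ℝ, |e| ≤ 16 * π * ‖x‖ ^ 2 * δ ^ 2 ∧
      (∫ y in D, Real.log (max ‖x‖ ‖y‖)) = 2 * π * c + π * Ω * ‖x‖ ^ 2 + e := by
    intro x hx
    have hx0 : x ≠ 0 := norm_pos_iff.1 (ha.trans_le (hqmin hx))
    have h1 := abs_potential_sub_radial_le hb ho.measurableSet (by omega) hinv hx0
    refine ⟨(∫ y in D, Real.log (max ‖x‖ ‖y‖)) - (∫ y in D, Real.log ‖x - y‖), ?_, ?_⟩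
    · rw [abs_sub_comm]
      refine h1.trans (le_of_eq ?_)
      rw [hδ]; ring
    · have h2 := hc x hx
      have h3 : (∫ y in D, Real.log ‖x - y‖) = 2 * π * c + π * Ω * ‖x‖ ^ 2 := by
        rw [← h2]; field_simp; ring
      rw [h3]; ring
  have h1δ : 1 ≤ 1 + δ := by linarith
  have hL2 : Real.log (1 + δ) ≤ δ := by
    have := Real.log_le_sub_one_of_pos (by linarith : 0 < 1 + δ); linarith
  have hL1 : δ - δ ^ 2 ≤ Real.log (1 + δ) := by
    have h := Real.one_sub_inv_le_log_of_pos (by linarith : 0 < 1 + δ)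
    refine le_trans ?_ h
    have : 1 - (1 + δ)⁻¹ = δ / (1 + δ) := by field_simp; ring
    rw [this, le_div_iff₀ (by linarith)]
    nlinarith [pow_pos hδ0 3]
  have hδsq : (1 + δ) ^ 2 ≤ 2 := by nlinarith
  refine final_estimate hδ0 hδ1 hbp hL1 hL2 (Ω := Ω) ?_ ?_
  · obtain ⟨q', hq', hnq'⟩ := hival (‖q‖ * (1 + δ)) (by nlinarith) hcase
    obtain ⟨e, he, heq⟩ := key q hq
    obtain ⟨e', he', heq'⟩ := key q' hq'
    have h := le_radial_increment hb ha h1δ hball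
    rw [hnq'] at he' heq'
    rw [heq, heq'] at h
    rw [abs_le] at he he'
    have hk : 0 < π * ‖q‖ ^ 2 := by positivity
    refine le_of_mul_le_mul_left (a := π * ‖q‖ ^ 2) ?_ hk
    have h5 : 16 * π * (‖q‖ * (1 + δ)) ^ 2 * δ ^ 2 ≤ 32 * π * ‖q‖ ^ 2 * δ ^ 2 := by
      have := mul_le_mul_of_nonneg_left hδsq (by positivity : 0 ≤ 16 * π * ‖q‖ ^ 2 * δ ^ 2)
      linarith
    linarith
  · have hpd : ‖p‖ / (1 + δ) ≤ ‖p‖ := div_le_self hbp.le h1δ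
    obtain ⟨p', hp', hnp'⟩ := hival (‖p‖ / (1 + δ)) (by rwa [le_div_iff₀ (by linarith)]) hpd
    obtain ⟨e, he, heq⟩ := key p hp
    obtain ⟨e', he', heq'⟩ := key p' hp'
    have hbp' : 0 < ‖p'‖ := ha.trans_le (hqmin hp')
    have h := radial_increment_le hb hvol hbp' h1δ
    have hpp' : ‖p‖ = ‖p'‖ * (1 + δ) := by rw [hnp']; field_simp
    rw [← hpp', heq, heq'] at h
    rw [abs_le] at he he'
    have h5 : 16 * π * ‖p'‖ ^ 2 * δ ^ 2 ≤ 16 * π * ‖p‖ ^ 2 * δ ^ 2 := by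
      have : ‖p'‖ ≤ ‖p‖ := by rw [hnp']; exact hpd
      gcongr
    have h6 : Ω * (‖p‖ ^ 2 - ‖p'‖ ^ 2) ≤ Real.log (1 + δ) + 32 * ‖p‖ ^ 2 * δ ^ 2 := by
      refine le_of_mul_le_mul_left (a := π) ?_ hpi
      linarith
    have h7 := mul_le_mul_of_nonneg_left h6 (by positivity : 0 ≤ (1 + δ) ^ 2)
    refine le_trans (le_of_eq ?_) h7
    rw [hpp']; ring

/-! ### Transfer to the Euclidean plane -/

/-- Under the identification of `ℂ` with the plane, `rot α` is multiplication by `e^{iα}`. -/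
lemma rot_repr (α : ℝ) (z : ℂ) :
    rot α (Complex.orthonormalBasisOneI.repr z)
      = Complex.orthonormalBasisOneI.repr (Complex.exp (α * Complex.I) * z) := by
  have hexp : Complex.exp (α * Complex.I) = ⟨Real.cos α, Real.sin α⟩ := by
    apply Complex.ext <;> simp [Complex.exp_ofReal_mul_I_re, Complex.exp_ofReal_mul_I_im]
  ext i
  fin_cases i <;>
    simp [rot, pt, hexp, Complex.orthonormalBasisOneI_repr_apply]; ring

/-- For an `m`-fold symmetric rotating patch of area `π` with `m ≥ m₁`,
the outmost boundary point satisfies `r_max − 1 ≤ c/m`. -/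
theorem mfold_rmax_bound :
    ∃ c > (0 : ℝ), ∃ m₁ : ℕ, 3 ≤ m₁ ∧
      ∀ (m : ℕ), m₁ ≤ m → ∀ (D : Set R2) (Ω : ℝ),
        IsPatchSolution D Ω → volume D = ENNReal.ofReal π →
        MFoldSymmetric m D →
        sSup ((fun x : R2 => ‖x‖) '' frontier D) - 1 ≤ c / m := by
  refine ⟨166, by norm_num, 166, by norm_num, ?_⟩
  rintro m hm D Ω ⟨ho, hb, hsc, ⟨γ, hγ, -, -, -, hγr⟩, c, hc⟩ hvol hsym
  set e := Complex.orthonormalBasisOneI.repr with he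
  have hfr : frontier (e ⁻¹' D) = e ⁻¹' frontier D := (e.toHomeomorph.preimage_frontier D).symm
  have hrot : ∀ z, Complex.exp (2 * π * Complex.I / m) * z ∈ e ⁻¹' D ↔ z ∈ e ⁻¹' D := by
    have hre : ∀ z, rot (2 * π / m) (e z) = e (Complex.exp (2 * π * Complex.I / m) * z) := by
      intro z
      rw [he, rot_repr]
      congr 3
      push_cast; ring
    intro z
    rw [mem_preimage, mem_preimage, ← hre]
    constructor
    · intro h
      rw [← hsym] at h
      obtain ⟨w, hw, hwz⟩ := h
      obtain ⟨w, rfl⟩ := e.surjective w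
      rw [hre, hre] at hwz
      rwa [← mul_left_cancel₀ (Complex.exp_ne_zero _) (e.injective hwz)]
    · intro h
      rw [← hsym]
      exact mem_image_of_mem _ h
  have hconn : IsConnected (frontier D) := by
    rw [← hγr]
    exact isConnected_range hγ.continuous
  have hmain := fun p : ℂ => norm_frontier_le hm (p := p) (D := e ⁻¹' D) (Ω := Ω) (c := c)
    (ho.preimage e.continuous) (e.antilipschitz.isBounded_preimage hb)
    (e.toHomeomorph.isSimplyConnected_preimage.2 hsc)
    (by
      rw [hfr]
      exact e.toHomeomorph.isConnected_preimage.2 hconn)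
    (by rw [e.measurePreserving.measure_preimage_emb e.toHomeomorph.measurableEmbedding, hvol])
    hrot
    (by
      intro x hx
      rw [hfr] at hx
      rw [← hc _ hx, streamFun, patchConv,
        ← e.measurePreserving.setIntegral_preimage_emb e.toHomeomorph.measurableEmbedding,
        e.norm_map, ← integral_const_mul]
      simp only [nker, ← map_sub, e.norm_map])
  rw [sub_le_iff_le_add']
  refine csSup_le (hconn.nonempty.image _) ?_
  rintro _ ⟨x, hx, rfl⟩
  obtain ⟨z, rfl⟩ := e.surjective x
  have := hmain z (by rw [hfr]; exact hx)
  simpa only [e.norm_map] using this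
end
end

section
/- There exists a universal constant C > 0 such that the following holds: let (D, Ω) be a solution of the rotating patch equation with |D| = π, where ∂D = {(1 + u(θ))(cos θ, sin θ) : θ ∈ 𝕋} for a C² function u : 𝕋 → (−1, ∞) that is even, (2π/m)-periodic for some integer m ≥ 3, satisfies u′(θ) < 0 for all θ ∈ (0, π/m), is not identically zero, and has ‖u‖_{L∞(𝕋)} ≤ 1/2. Set r_max = max_{x ∈ ∂D} |x| = 1 + u(0). Then 1/2 − Ω ≥ C · (∫_𝕋 u(θ)² dθ) / (r_max · ‖u‖_{L∞(𝕋)}). -/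
/-!
The plane is identified with `ℂ`. Let `pot D x = ∫_D log |x - y| dy`, which is `2π` times the
Newtonian potential of the patch, and `harm D x = pot D x - (π/2)|x|²`, which is harmonic in `D`.
Writing `κ = 1/2 - Ω`, the patch equation says that `harm D = c - πκ|x|²` on the boundary.

*Positivity of `κ`.* If `κ ≤ 0`, then by the maximum principle `harm D` is maximal at the boundary
point `x₀` furthest from the origin. With `R = |x₀|`, the potential of the ball `B_R` equals
`(π/2)|x|²` up to a constant inside `B_R`, so `harm D` is a constant minus the potential of
`B_R \ D`. Every point of `B_R` attracts `x₀` inwards, so the latter potential has a positive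
radial derivative at `x₀` unless `B_R \ D` is null (`volume_ball_diff_eq_zero`). As the area of `D`
is `π`, this forces `R = 1`, hence `u ≤ 0`, and the area constraint gives `u = 0`.

*The estimate.* Let `M = ‖u‖_∞`. The maximum principle shows that `harm D` differs from a constant
by at most `η = 2πκM` in `D`. On the other hand, symmetrizing the double integral
`∬ x · (x - y) / |x - y|²` gives `∫_D x · ∇(harm D) = |D|²/2 - π ∫_D |x|²`. Since `D` is starshaped,
the left-hand side is at least `-4|D|η`; this is seen without boundary integrals, by comparing
`harm D` on `D` and on its dilations `s D`, `s → 1⁺` (`second_moment_le`). Hence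
`∫_D |x|² - π/2 ≤ 8πκM`. In polar coordinates, and using `|D| = π`, the left-hand side equals
`¼ ∫ u² (2 + u)²`, which is at least `(9/16) ∫ u²` because `u ≥ -1/2`.
-/

open MeasureTheory Set Real Bornology

noncomputable section

section Aux

open Metric Filter Topology
open scoped Pointwise

/-! ### Logarithmic potentials of bounded planar sets -/

/-- The logarithmic potential `∫_D log |x - y| dy` of a planar set, i.e. `2π` times the Newtonian
potential, with the plane modelled by `ℂ`. -/
def pot (D : Set ℂ) (x : ℂ) : ℝ := ∫ y in D, Real.log ‖x - y‖

lemma integrableOn_inv_ball : IntegrableOn (fun z : ℂ => ‖z‖⁻¹) (ball 0 1) := by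
  have h := integrableOn_fun_norm_addHaar (E := ℂ) (volume : Measure ℂ) (f := fun t : ℝ => t⁻¹)
    (r := 1)
  rw [h]
  have h1 : IntegrableOn (fun _ : ℝ => (1 : ℝ)) (Ioo 0 1) := by simp
  refine h1.congr_fun (fun x hx => ?_) measurableSet_Ioo
  have : x ≠ 0 := hx.1.ne'
  simp [Complex.finrank_real_complex, this]

/-- The absolute constant `∫_{|z| < 1} |z|⁻¹ dz`, which controls the singularity of `|z|⁻¹`. -/
def kerConst : ℝ := ∫ z in ball (0 : ℂ) 1, ‖z‖⁻¹

lemma kerConst_nonneg : 0 ≤ kerConst := integral_nonneg fun _ => by positivity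

lemma integrable_ind (x : ℂ) :
    Integrable (fun y : ℂ => (ball (0 : ℂ) 1).indicator (fun z => ‖z‖⁻¹) (x - y)) :=
  ((integrable_indicator_iff measurableSet_ball).2 integrableOn_inv_ball).comp_sub_left x

lemma integral_ind (x : ℂ) :
    ∫ y : ℂ, (ball (0 : ℂ) 1).indicator (fun z => ‖z‖⁻¹) (x - y) = kerConst := by
  rw [integral_sub_left_eq_self (fun y => (ball (0 : ℂ) 1).indicator (fun z => ‖z‖⁻¹) y) volume x,
    integral_indicator measurableSet_ball, kerConst]

lemma inv_le_ind (z : ℂ) : ‖z‖⁻¹ ≤ 1 + (ball (0 : ℂ) 1).indicator (fun z => ‖z‖⁻¹) z := by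
  by_cases h : z ∈ ball (0 : ℂ) 1
  · simp [indicator_of_mem h]
  · simp only [indicator_of_notMem h, add_zero]
    simp at h
    exact inv_le_one_of_one_le₀ h

lemma integrableOn_dom {D : Set ℂ} (hD : volume D ≠ ⊤) (x : ℂ) :
    IntegrableOn (fun y : ℂ => 1 + (ball (0 : ℂ) 1).indicator (fun z => ‖z‖⁻¹) (x - y)) D :=
  (integrableOn_const hD).add (integrable_ind x).integrableOn

lemma integrableOn_inv {D : Set ℂ} (hD : volume D ≠ ⊤) (x : ℂ) :
    IntegrableOn (fun y : ℂ => ‖x - y‖⁻¹) D := by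
  refine (integrableOn_dom hD x).mono' (by fun_prop) (ae_of_all _ fun y => ?_)
  rw [Real.norm_of_nonneg (by positivity)]
  exact inv_le_ind (x - y)

/-- A bound on `∫_D |x - y|⁻¹ dy` that is uniform in `x`. -/
lemma integral_inv_le {D : Set ℂ} (hD : volume D ≠ ⊤) (x : ℂ) :
    ∫ y in D, ‖x - y‖⁻¹ ≤ volume.real D + kerConst := by
  calc ∫ y in D, ‖x - y‖⁻¹
      ≤ ∫ y in D, (1 + (ball (0 : ℂ) 1).indicator (fun z => ‖z‖⁻¹) (x - y)) :=
        integral_mono (integrableOn_inv hD x) (integrableOn_dom hD x) fun y => inv_le_ind (x - y)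
    _ = volume.real D + ∫ y in D, (ball (0 : ℂ) 1).indicator (fun z => ‖z‖⁻¹) (x - y) := by
        have h1 : Integrable (fun _ : ℂ => (1 : ℝ)) (volume.restrict D) := integrableOn_const hD
        rw [integral_add h1 (integrable_ind x).integrableOn]
        simp
    _ ≤ _ := by
        gcongr
        rw [← integral_ind x]
        refine setIntegral_le_integral (integrable_ind x) (ae_of_all _ fun y => ?_)
        exact indicator_nonneg (fun z _ => by positivity) _

lemma abs_log_le {t : ℝ} (ht : 0 ≤ t) : |Real.log t| ≤ t + t⁻¹ := by
  rcases ht.eq_or_lt with rfl | h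
  · simp
  · have h1 := Real.log_le_sub_one_of_pos h
    have h2 := Real.log_le_sub_one_of_pos (inv_pos.2 h)
    rw [Real.log_inv] at h2
    have := inv_pos.2 h
    rw [abs_le]; constructor <;> linarith

lemma integrableOn_norm_sub {D : Set ℂ} (hD : IsBounded D) (x : ℂ) :
    IntegrableOn (fun y : ℂ => ‖x - y‖) D := by
  have hc : Continuous (fun y : ℂ => ‖x - y‖) := by fun_prop
  obtain ⟨R, hR⟩ := hD.subset_closedBall (0 : ℂ)
  exact (hc.continuousOn.integrableOn_compact (isCompact_closedBall 0 R)).mono_set hR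

lemma integrableOn_log {D : Set ℂ} (hD : IsBounded D) (x : ℂ) :
    IntegrableOn (fun y : ℂ => Real.log ‖x - y‖) D := by
  refine ((integrableOn_norm_sub hD x).add (integrableOn_inv hD.measure_lt_top.ne x)).mono'
    (Measurable.aestronglyMeasurable (by fun_prop)) (ae_of_all _ fun y => ?_)
  exact abs_log_le (norm_nonneg _)

lemma log_sub_log_le {a b : ℝ} (ha : 0 < a) (hb : 0 < b) :
    Real.log a - Real.log b ≤ (a - b) * b⁻¹ := by
  rw [← Real.log_div ha.ne' hb.ne']
  refine (Real.log_le_sub_one_of_pos (by positivity)).trans (le_of_eq ?_)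
  field_simp

lemma ae_ne_pt {D : Set ℂ} (x : ℂ) : ∀ᵐ y ∂(volume.restrict D), 0 < ‖x - y‖ := by
  have : ∀ᵐ y : ℂ, y ≠ x := by simp [ae_iff]
  filter_upwards [ae_restrict_of_ae this] with y hy
  exact norm_pos_iff.2 (sub_ne_zero.2 hy.symm)

lemma pot_sub_le {D : Set ℂ} (hD : IsBounded D) (x x' : ℂ) :
    pot D x - pot D x' ≤ (volume.real D + kerConst) * ‖x - x'‖ := by
  rw [pot, pot, ← integral_sub (integrableOn_log hD x) (integrableOn_log hD x')]
  calc ∫ y in D, (Real.log ‖x - y‖ - Real.log ‖x' - y‖)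
      ≤ ∫ y in D, ‖x' - y‖⁻¹ * ‖x - x'‖ := by
        refine integral_mono_ae ((integrableOn_log hD x).sub (integrableOn_log hD x'))
          ((integrableOn_inv hD.measure_lt_top.ne x').mul_const _) ?_
        filter_upwards [ae_ne_pt x, ae_ne_pt x'] with y h1 h2
        refine (log_sub_log_le h1 h2).trans ?_
        rw [mul_comm]
        gcongr
        have := norm_sub_norm_le (x - y) (x' - y)
        simpa using this
    _ = (∫ y in D, ‖x' - y‖⁻¹) * ‖x - x'‖ := integral_mul_const _ _
    _ ≤ _ := by
        gcongr
        exact integral_inv_le hD.measure_lt_top.ne _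

/-- The potential of a bounded set is globally Lipschitz. -/
lemma abs_pot_sub_le {D : Set ℂ} (hD : IsBounded D) (x x' : ℂ) :
    |pot D x - pot D x'| ≤ (volume.real D + kerConst) * ‖x - x'‖ := by
  rw [abs_le]
  have h1 := pot_sub_le hD x x'
  have h2 := pot_sub_le hD x' x
  rw [norm_sub_rev] at h2
  constructor <;> linarith

lemma continuous_pot {D : Set ℂ} (hD : IsBounded D) : Continuous (pot D) := by
  have : LipschitzWith (Real.toNNReal (volume.real D + kerConst)) (pot D) := by
    refine LipschitzWith.of_dist_le_mul fun x y => ?_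
    rw [Real.dist_eq, dist_eq_norm, Real.coe_toNNReal _
      (add_nonneg measureReal_nonneg kerConst_nonneg)]
    exact abs_pot_sub_le hD x y
  exact this.continuous

/-! ### Mean value property and maximum principle -/

lemma integrable_prod_inv {α : Type*} [MeasurableSpace α] (μ : Measure α) [IsFiniteMeasure μ]
    {X : α → ℂ} (hX : Measurable X) {D : Set ℂ} (hD : volume D ≠ ⊤) :
    Integrable (fun p : α × ℂ => ‖X p.1 - p.2‖⁻¹) (μ.prod (volume.restrict D)) := by
  have : IsFiniteMeasure (volume.restrict D) := ⟨by simpa using hD.lt_top⟩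
  have hm : AEStronglyMeasurable (fun p : α × ℂ => ‖X p.1 - p.2‖⁻¹)
      (μ.prod (volume.restrict D)) := Measurable.aestronglyMeasurable (by fun_prop)
  rw [integrable_prod_iff hm]
  refine ⟨ae_of_all _ fun a => integrableOn_inv hD (X a), ?_⟩
  refine (integrable_const (volume.real D + kerConst)).mono' hm.norm.integral_prod_right'
    (ae_of_all _ fun a => ?_)
  rw [Real.norm_of_nonneg (integral_nonneg fun _ => norm_nonneg _)]
  simpa using integral_inv_le hD (X a)

lemma integrable_prod_log {α : Type*} [MeasurableSpace α] (μ : Measure α) [IsFiniteMeasure μ]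
    {X : α → ℂ} (hX : Measurable X) {M : ℝ} (hM : ∀ᵐ a ∂μ, ‖X a‖ ≤ M) {D : Set ℂ}
    (hD : IsBounded D) (hDm : MeasurableSet D) :
    Integrable (fun p : α × ℂ => Real.log ‖X p.1 - p.2‖) (μ.prod (volume.restrict D)) := by
  have : IsFiniteMeasure (volume.restrict D) := ⟨by simpa using hD.measure_lt_top⟩
  obtain ⟨R, hR⟩ := hD.subset_closedBall (0 : ℂ)
  refine ((integrable_const (M + R)).add (integrable_prod_inv μ hX hD.measure_lt_top.ne)).mono'
    (Measurable.aestronglyMeasurable (by fun_prop)) ?_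
  have h1 : ∀ᵐ y ∂(volume.restrict D), ‖y‖ ≤ R :=
    (ae_restrict_iff' hDm).2 (ae_of_all _ fun y hy => by simpa using hR hy)
  filter_upwards [Measure.quasiMeasurePreserving_fst.ae hM,
    Measure.quasiMeasurePreserving_snd.ae h1] with p hp1 hp2
  refine (abs_log_le (norm_nonneg _)).trans ?_
  simp only [Pi.add_apply]
  gcongr
  exact (norm_sub_le _ _).trans (by linarith)

lemma integral_mul_log_defect {r : ℝ} (hr : 0 < r) :
    ∫ t in (0 : ℝ)..r, t * (Real.log r - Real.log t) = r ^ 2 / 4 := by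
  have hc : Continuous fun t : ℝ => t * (Real.log r - Real.log t) := by
    have : (fun t : ℝ => t * (Real.log r - Real.log t)) =
      fun t => t * Real.log r - t * Real.log t := by ext; ring
    rw [this]
    exact (continuous_id.mul continuous_const).sub Real.continuous_mul_log
  have hQ : Continuous fun t : ℝ => t ^ 2 / 2 * Real.log r - t / 2 * (t * Real.log t) + t ^ 2 / 4 :=
    ((by fun_prop : Continuous fun t : ℝ => t ^ 2 / 2 * Real.log r).sub
      ((by fun_prop : Continuous fun t : ℝ => t / 2).mul Real.continuous_mul_log)).add
      (by fun_prop)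
  rw [intervalIntegral.integral_eq_sub_of_hasDerivAt_of_le hr.le hQ.continuousOn
    (fun t ht => ?_) (hc.intervalIntegrable _ _)]
  · simp; ring
  · have ht0 : t ≠ 0 := ht.1.ne'
    have h1 : HasDerivAt (fun t : ℝ => t ^ 2) (2 * t) t := by simpa using hasDerivAt_pow 2 t
    have h2 := Real.hasDerivAt_mul_log ht0
    have := (((h1.div_const 2).mul_const (Real.log r)).sub
      (((hasDerivAt_id t).div_const 2).mul h2)).add (h1.div_const 4)
    refine this.congr_deriv ?_
    simp; ring

/-- Total difference between the circle average of `log |· - y|` and its value at the centre `z`,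
integrated over the poles `y` inside the circle. -/
lemma integral_log_defect (z : ℂ) {r : ℝ} (hr : 0 < r) :
    ∫ y : ℂ, (ball z r).indicator (fun y => Real.log r - Real.log ‖z - y‖) y = π * r ^ 2 / 2 := by
  set f : ℝ → ℝ := (Iio r).indicator (fun t => Real.log r - Real.log t) with hf
  have h1 : ∀ y : ℂ, (ball z r).indicator (fun y => Real.log r - Real.log ‖z - y‖) y
      = f ‖z - y‖ := by
    intro y
    simp only [hf, indicator, mem_ball, mem_Iio, dist_comm y z, dist_eq_norm]
  simp_rw [h1]
  rw [integral_sub_left_eq_self (fun w : ℂ => f ‖w‖) volume z, integral_fun_norm_addHaar]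
  have h2 : ∫ y in Ioi (0 : ℝ), y ^ (Module.finrank ℝ ℂ - 1) • f y = r ^ 2 / 4 := by
    rw [← integral_mul_log_defect hr, intervalIntegral.integral_of_le hr.le,
      integral_Ioc_eq_integral_Ioo, ← integral_indicator measurableSet_Ioi,
      ← integral_indicator measurableSet_Ioo]
    congr 1; ext t
    simp only [Complex.finrank_real_complex, hf, indicator, mem_Ioi, mem_Ioo, mem_Iio]
    by_cases ht : 0 < t <;> by_cases h : t < r <;> simp [ht, h]
  rw [h2]
  simp [Complex.finrank_real_complex, Measure.real, Complex.volume_ball]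
  ring

/-- The logarithm has the mean value property as long as its pole `y` is outside the circle; for a
pole inside, the circle average is `log r`. -/
lemma circleAverage_log_eq (z y : ℂ) {r : ℝ} (hr : 0 < r) :
    circleAverage (fun x => Real.log ‖x - y‖) z r = Real.log ‖z - y‖ +
      (ball z r).indicator (fun y => Real.log r - Real.log ‖z - y‖) y := by
  rw [circleAverage_log_norm_sub_const_eq_log_radius_add_posLog hr.ne']
  by_cases h : y ∈ ball z r
  · rw [indicator_of_mem h]
    rw [mem_ball, dist_comm, dist_eq_norm] at h
    have : Real.posLog (r⁻¹ * ‖z - y‖) = 0 := by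
      rw [Real.posLog_eq_zero_iff, abs_of_nonneg (by positivity), inv_mul_le_iff₀ hr]
      linarith
    rw [this]; ring
  · rw [indicator_of_notMem h]
    rw [mem_ball, dist_comm, dist_eq_norm, not_lt] at h
    rw [Real.posLog_eq_log, Real.log_mul (by positivity) (by linarith), Real.log_inv]
    · ring
    · rw [abs_of_nonneg (by positivity), le_inv_mul_iff₀ hr]
      linarith

/-- The logarithmic potential has Laplacian `2π` inside `D`, in mean-value form. -/
lemma circleAverage_pot {D : Set ℂ} (hb : IsBounded D) (hD : MeasurableSet D) {z : ℂ} {r : ℝ}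
    (hr : 0 < r) (hs : ball z r ⊆ D) :
    circleAverage (pot D) z r = pot D z + π * r ^ 2 / 2 := by
  have hX : Measurable fun θ : ℝ => circleMap z r θ := (continuous_circleMap z r).measurable
  have hinteg := integrable_prod_log (volume.restrict (Ioc 0 (2 * π))) hX (M := ‖z‖ + r)
    (ae_of_all _ fun θ => by
      rw [circleMap]
      refine (norm_add_le _ _).trans ?_
      simp [Complex.norm_exp, abs_of_pos hr]) hb hD
  calc circleAverage (pot D) z r
      = (2 * π)⁻¹ * ∫ θ in Ioc 0 (2 * π), ∫ y in D, Real.log ‖circleMap z r θ - y‖ := by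
        rw [circleAverage_def, intervalIntegral.integral_of_le (by positivity)]; rfl
    _ = (2 * π)⁻¹ * ∫ y in D, ∫ θ in Ioc 0 (2 * π), Real.log ‖circleMap z r θ - y‖ := by
        rw [integral_integral_swap hinteg]
    _ = ∫ y in D, circleAverage (fun x => Real.log ‖x - y‖) z r := by
        rw [← integral_const_mul]
        congr 1; ext y
        rw [circleAverage_def, intervalIntegral.integral_of_le (by positivity)]; rfl
    _ = ∫ y in D, (Real.log ‖z - y‖ +
          (ball z r).indicator (fun y => Real.log r - Real.log ‖z - y‖) y) := by
        congr 1; ext y; exact circleAverage_log_eq z y hr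
    _ = pot D z + π * r ^ 2 / 2 := by
        rw [integral_add (integrableOn_log hb z), ← integral_log_defect z hr, pot]
        · congr 1
          rw [setIntegral_indicator measurableSet_ball, integral_indicator measurableSet_ball,
            inter_eq_self_of_subset_right hs]
        · refine Integrable.integrableOn ?_
          rw [integrable_indicator_iff measurableSet_ball]
          exact (integrableOn_const measure_ball_lt_top.ne).sub (integrableOn_log isBounded_ball z)

lemma circleAverage_norm_sq (z : ℂ) (r : ℝ) :
    circleAverage (fun x => ‖x‖ ^ 2) z r = ‖z‖ ^ 2 + r ^ 2 := by
  have h : ∀ θ : ℝ, ‖circleMap z r θ‖ ^ 2 =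
      ‖z‖ ^ 2 + r ^ 2 + (2 * r * z.re * Real.cos θ + 2 * r * z.im * Real.sin θ) := by
    intro θ
    rw [← Complex.normSq_eq_norm_sq, ← Complex.normSq_eq_norm_sq, Complex.normSq_apply,
      Complex.normSq_apply]
    have h1 : (circleMap z r θ).re = z.re + r * Real.cos θ := by
      simp [circleMap, Complex.exp_ofReal_mul_I_re]
    have h2 : (circleMap z r θ).im = z.im + r * Real.sin θ := by
      simp [circleMap, Complex.exp_ofReal_mul_I_im]
    rw [h1, h2]
    linear_combination r ^ 2 * Real.cos_sq_add_sin_sq θ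
  rw [circleAverage_def]
  simp_rw [h]
  rw [intervalIntegral.integral_add (by simp) (Continuous.intervalIntegrable (by fun_prop) _ _),
    intervalIntegral.integral_add (Continuous.intervalIntegrable (by fun_prop) _ _)
      (Continuous.intervalIntegrable (by fun_prop) _ _)]
  simp
  field_simp

/-- Weak maximum principle for continuous functions with the circle mean value property.
The perturbation by `ε |x|²` makes the mean value inequality strict. -/
lemma max_principle {D : Set ℂ} (hb : IsBounded D) (ho : IsOpen D) {h : ℂ → ℝ}
    (hc : Continuous h)
    (hmv : ∀ z r, 0 < r → ball z r ⊆ D → circleAverage h z r = h z) {M : ℝ}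
    (hM : ∀ x ∈ frontier D, h x ≤ M) : ∀ x ∈ D, h x ≤ M := by
  intro x hx
  by_contra! hlt
  obtain ⟨R, hR⟩ := hb.closure.subset_closedBall (0 : ℂ)
  set ε : ℝ := (h x - M) / (2 * (R ^ 2 + 1)) with hε
  have hε0 : 0 < ε := by
    have : 0 < h x - M := by linarith
    positivity
  have hεR : ε * R ^ 2 < h x - M := by
    rw [hε, div_mul_eq_mul_div, div_lt_iff₀ (by positivity)]
    nlinarith [sq_nonneg R]
  have hcφ : Continuous fun w : ℂ => h w + ε * ‖w‖ ^ 2 := by fun_prop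
  obtain ⟨z, hz, hmax⟩ := (hb.isCompact_closure).exists_isMaxOn ⟨x, subset_closure hx⟩
    hcφ.continuousOn
  have hzx : h x + ε * ‖x‖ ^ 2 ≤ h z + ε * ‖z‖ ^ 2 := hmax (subset_closure hx)
  have hzR : ‖z‖ ≤ R := by simpa using hR hz
  have hzR2 : ‖z‖ ^ 2 ≤ R ^ 2 := by gcongr
  have hzD : z ∈ D := by
    by_contra hzD
    have h1 := hM z (by rw [ho.frontier_eq]; exact ⟨hz, hzD⟩)
    have h2 : ε * ‖z‖ ^ 2 ≤ ε * R ^ 2 := by gcongr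
    have h3 : 0 ≤ ε * ‖x‖ ^ 2 := by positivity
    linarith
  obtain ⟨r, hr, hrD⟩ := Metric.nhds_basis_closedBall.mem_iff.1 (ho.mem_nhds hzD)
  have hle : circleAverage (fun w : ℂ => h w + ε * ‖w‖ ^ 2) z r ≤ h z + ε * ‖z‖ ^ 2 := by
    refine circleAverage_mono_on_of_le_circle hcφ.continuousOn.circleIntegrable' fun w hw => ?_
    refine hmax (subset_closure (hrD ?_))
    rw [abs_of_pos hr] at hw
    exact sphere_subset_closedBall hw
  have hn : Continuous fun w : ℂ => ε * ‖w‖ ^ 2 := by fun_prop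
  have heq : circleAverage (fun w : ℂ => h w + ε * ‖w‖ ^ 2) z r
      = h z + ε * (‖z‖ ^ 2 + r ^ 2) := by
    rw [circleAverage_fun_add hc.continuousOn.circleIntegrable' hn.continuousOn.circleIntegrable',
      hmv z r hr (ball_subset_closedBall.trans hrD), ← circleAverage_norm_sq]
    congr 1
    exact circleAverage_fun_smul (f := fun w : ℂ => ‖w‖ ^ 2) (a := ε)
  rw [heq] at hle
  have : 0 < ε * r ^ 2 := by positivity
  linarith

/-- `∫_D log |x - y| dy - (π/2) |x|²`, which is harmonic in `D`. -/
def harm (D : Set ℂ) (x : ℂ) : ℝ := pot D x - π / 2 * ‖x‖ ^ 2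

lemma continuous_harm {D : Set ℂ} (hb : IsBounded D) : Continuous (harm D) :=
  (continuous_pot hb).sub (by fun_prop)

lemma circleAverage_harm {D : Set ℂ} (hb : IsBounded D) (ho : IsOpen D) (z : ℂ) (r : ℝ)
    (hr : 0 < r) (hs : ball z r ⊆ D) : circleAverage (harm D) z r = harm D z := by
  have hn : Continuous fun w : ℂ => π / 2 * ‖w‖ ^ 2 := by fun_prop
  have h2 : circleAverage (fun w : ℂ => π / 2 * ‖w‖ ^ 2) z r = π / 2 * (‖z‖ ^ 2 + r ^ 2) := by
    rw [← circleAverage_norm_sq]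
    exact circleAverage_fun_smul (f := fun w : ℂ => ‖w‖ ^ 2) (a := π / 2)
  have h3 : circleAverage (harm D) z r =
      circleAverage (pot D) z r - circleAverage (fun w : ℂ => π / 2 * ‖w‖ ^ 2) z r :=
    circleAverage_fun_sub (continuous_pot hb).continuousOn.circleIntegrable'
      hn.continuousOn.circleIntegrable'
  rw [h3, h2, circleAverage_pot hb ho.measurableSet hr hs, harm]
  ring

lemma harm_le {D : Set ℂ} (hb : IsBounded D) (ho : IsOpen D) {M : ℝ}
    (hM : ∀ x ∈ frontier D, harm D x ≤ M) : ∀ x ∈ D, harm D x ≤ M :=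
  max_principle hb ho (continuous_harm hb) (circleAverage_harm hb ho) hM

lemma le_harm {D : Set ℂ} (hb : IsBounded D) (ho : IsOpen D) {M : ℝ}
    (hM : ∀ x ∈ frontier D, M ≤ harm D x) : ∀ x ∈ D, M ≤ harm D x := by
  intro x hx
  have := max_principle (h := fun x => -harm D x) (M := -M) hb ho (continuous_harm hb).neg
    (fun z r hr hs => ?_) (fun y hy => neg_le_neg (hM y hy)) x hx
  · exact neg_le_neg_iff.1 this
  · rw [← circleAverage_harm hb ho z r hr hs, circleAverage_def, circleAverage_def]
    simp

/-- The potential of a centred disc is radial and harmonic up to `(π/2)|x|²`, so the maximum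
principle identifies it up to a constant. -/
lemma harm_ball_eq {R : ℝ} (hR : 0 < R) {x x' : ℂ} (hx : ‖x‖ ≤ R) (hx' : ‖x'‖ ≤ R) :
    harm (ball 0 R) x = harm (ball 0 R) x' := by
  have hrad : ∀ (w : ℂ) (a : Circle), pot (ball 0 R) (a * w) = pot (ball 0 R) w := by
    intro w a
    have hmp := (rotation a).measurePreserving
    have h1 := hmp.setIntegral_preimage_emb
      (rotation a).toHomeomorph.measurableEmbedding
      (fun y => Real.log ‖(a : ℂ) * w - y‖) (ball 0 R)
    have h2 : (rotation a) ⁻¹' ball (0 : ℂ) R = ball 0 R := by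
      ext y
      rw [mem_preimage, mem_ball_zero_iff, mem_ball_zero_iff, LinearIsometryEquiv.norm_map]
    rw [h2] at h1
    rw [pot, pot, ← h1]
    congr 1; ext y
    rw [rotation_apply, ← mul_sub, norm_mul, Circle.norm_coe, one_mul]
  have hfr : ∀ w ∈ frontier (ball (0 : ℂ) R), harm (ball 0 R) w = harm (ball 0 R) (R : ℂ) := by
    intro w hw
    rw [frontier_ball _ hR.ne', mem_sphere_zero_iff_norm] at hw
    have : w = (Circle.exp w.arg : ℂ) * (R : ℂ) := by
      rw [Circle.coe_exp, ← hw, mul_comm, Complex.norm_mul_exp_arg_mul_I]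
    rw [harm, harm, hw, this, hrad]
    simp
  have hall : ∀ w : ℂ, ‖w‖ ≤ R → harm (ball 0 R) w = harm (ball 0 R) (R : ℂ) := by
    intro w hw
    rcases hw.lt_or_eq with h | h
    · have hw' : w ∈ ball (0 : ℂ) R := by simpa using h
      exact le_antisymm (harm_le isBounded_ball isOpen_ball (fun y hy => (hfr y hy).le) w hw')
        (le_harm isBounded_ball isOpen_ball (fun y hy => (hfr y hy).ge) w hw')
    · exact hfr w (by rw [frontier_ball _ hR.ne']; simpa using h)
  exact (hall x hx).trans (hall x' hx').symm

/-! ### Dilations and the second moment -/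

/-- Difference quotient at `s = 1` of the dilation `s ↦ log |s x - y|`. -/
def dilQuot (s : ℝ) (x y : ℂ) : ℝ := (Real.log ‖s • x - y‖ - Real.log ‖x - y‖) / (s - 1)

/-- The limit `x · (x - y) / |x - y|²` of `dilQuot s x y` as `s → 1`. -/
def dilKer (x y : ℂ) : ℝ := inner ℝ (x - y) x / ‖x - y‖ ^ 2

lemma tendsto_dilQuot {x y : ℂ} (h : 0 < ‖x - y‖) :
    Tendsto (fun s => dilQuot s x y) (𝓝[≠] 1) (𝓝 (dilKer x y)) := by
  have h1 : HasDerivAt (fun s : ℝ => s • x - y) x 1 := by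
    simpa using ((hasDerivAt_id (1 : ℝ)).smul_const x).sub_const y
  have h2 := h1.norm_sq
  have h3 := (h2.log (by simpa using h.ne')).div_const 2
  have h4 : HasDerivAt (fun s : ℝ => Real.log ‖s • x - y‖) (dilKer x y) 1 := by
    refine (h3.congr_deriv ?_).congr_of_eventuallyEq (Eventually.of_forall fun s => ?_)
    · simp only [one_smul, dilKer]; field_simp
    · simp [Real.log_pow]
  have h5 := hasDerivAt_iff_tendsto_slope.1 h4
  refine h5.congr fun s => ?_
  simp [slope_def_field, dilQuot]

lemma abs_dilKer_le (x y : ℂ) : |dilKer x y| ≤ ‖x‖ * ‖x - y‖⁻¹ := by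
  rw [dilKer, abs_div, abs_of_nonneg (by positivity : 0 ≤ ‖x - y‖ ^ 2)]
  rcases eq_or_ne (‖x - y‖) 0 with h | h
  · simp [h]
  · rw [div_le_iff₀ (by positivity)]
    refine (abs_real_inner_le_norm _ _).trans (le_of_eq ?_)
    field_simp

lemma measurable_dilKer : Measurable fun p : ℂ × ℂ => dilKer p.1 p.2 := by
  unfold dilKer; fun_prop

lemma measurable_dilQuot (s : ℝ) : Measurable fun p : ℂ × ℂ => dilQuot s p.1 p.2 := by
  unfold dilQuot; fun_prop

lemma measurable_dilKer_right (x : ℂ) : Measurable fun y : ℂ => dilKer x y := by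
  unfold dilKer; fun_prop

lemma measurable_dilQuot_right (s : ℝ) (x : ℂ) : Measurable fun y : ℂ => dilQuot s x y := by
  unfold dilQuot; fun_prop

lemma log_dil_sub_le {s : ℝ} {x y : ℂ} (h : 0 < ‖x - y‖) (h' : 0 < ‖s • x - y‖) :
    Real.log ‖s • x - y‖ - Real.log ‖x - y‖ ≤ |s - 1| * (‖x‖ * ‖x - y‖⁻¹) := by
  refine (log_sub_log_le h' h).trans ?_
  rw [← mul_assoc]
  gcongr
  have h1 := norm_sub_norm_le (s • x - y) (x - y)
  have h2 : s • x - y - (x - y) = (s - 1) • x := by rw [sub_smul, one_smul]; abel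
  rwa [h2, norm_smul, Real.norm_eq_abs] at h1

/-- For `s > 1` only this one-sided bound is uniform: `s x` may be arbitrarily close to `y`. -/
lemma dilQuot_le {s : ℝ} (hs : 1 < s) {x y : ℂ} (h : 0 < ‖x - y‖) (h' : 0 < ‖s • x - y‖) :
    dilQuot s x y ≤ ‖x‖ * ‖x - y‖⁻¹ := by
  have := log_dil_sub_le h h'
  rw [abs_of_pos (by linarith)] at this
  rw [dilQuot, div_le_iff₀ (by linarith)]
  linarith

lemma le_dilQuot {s : ℝ} (hs : s < 1) {x y : ℂ} (h : 0 < ‖x - y‖) (h' : 0 < ‖s • x - y‖) :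
    -(‖x‖ * ‖x - y‖⁻¹) ≤ dilQuot s x y := by
  have := log_dil_sub_le h h'
  rw [abs_of_neg (by linarith)] at this
  rw [dilQuot, le_div_iff_of_neg (by linarith)]
  linarith

lemma ae_offdiag {α : Type*} [MeasurableSpace α] (μ : Measure α) [SFinite μ]
    {X : α → ℂ} (hX : Measurable X) (D : Set ℂ) :
    ∀ᵐ p ∂(μ.prod (volume.restrict D)), 0 < ‖X p.1 - p.2‖ := by
  have hms : MeasurableSet {p : α × ℂ | 0 < ‖X p.1 - p.2‖} :=
    measurableSet_lt measurable_const (by fun_prop)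
  have := (Measure.ae_prod_mem_iff_ae_ae_mem (μ := μ) (ν := volume.restrict D) hms).2
    (ae_of_all _ fun a => ae_ne_pt (X a))
  exact this

lemma integrable_dilBound {D : Set ℂ} (hb : IsBounded D) (hD : MeasurableSet D) :
    Integrable (fun p : ℂ × ℂ => ‖p.1‖ * ‖p.1 - p.2‖⁻¹)
      ((volume.restrict D).prod (volume.restrict D)) := by
  have : IsFiniteMeasure (volume.restrict D) := ⟨by simpa using hb.measure_lt_top⟩
  obtain ⟨R, hR⟩ := hb.subset_closedBall (0 : ℂ)
  refine ((integrable_prod_inv (volume.restrict D) measurable_id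
    hb.measure_lt_top.ne).const_mul R).mono' (Measurable.aestronglyMeasurable (by fun_prop)) ?_
  have h1 : ∀ᵐ y ∂(volume.restrict D), ‖y‖ ≤ R :=
    (ae_restrict_iff' hD).2 (ae_of_all _ fun y hy => by simpa using hR hy)
  filter_upwards [Measure.quasiMeasurePreserving_fst.ae h1] with p hp
  rw [Real.norm_of_nonneg (by positivity)]
  simp only [id]
  gcongr

lemma integrable_dilKer {D : Set ℂ} (hb : IsBounded D) (hD : MeasurableSet D) :
    Integrable (fun p : ℂ × ℂ => dilKer p.1 p.2)
      ((volume.restrict D).prod (volume.restrict D)) :=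
  (integrable_dilBound hb hD).mono' measurable_dilKer.aestronglyMeasurable
    (ae_of_all _ fun p => abs_dilKer_le p.1 p.2)

/-- Since `dilKer x y + dilKer y x = 1`, symmetrization evaluates the double integral. -/
lemma integral_dilKer {D : Set ℂ} (hb : IsBounded D) (hD : MeasurableSet D) :
    ∫ p, dilKer p.1 p.2 ∂((volume.restrict D).prod (volume.restrict D))
      = volume.real D ^ 2 / 2 := by
  have : IsFiniteMeasure (volume.restrict D) := ⟨by simpa using hb.measure_lt_top⟩
  have hi := integrable_dilKer hb hD
  have h1 := integral_prod_swap (μ := volume.restrict D) (ν := volume.restrict D)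
    (fun p : ℂ × ℂ => dilKer p.1 p.2)
  simp only [Prod.fst_swap, Prod.snd_swap] at h1
  have h2 : ∫ p, (dilKer p.1 p.2 + dilKer p.2 p.1)
      ∂((volume.restrict D).prod (volume.restrict D)) = volume.real D ^ 2 := by
    have : ∀ᵐ p ∂((volume.restrict D).prod (volume.restrict D)),
        dilKer p.1 p.2 + dilKer p.2 p.1 = 1 := by
      filter_upwards [ae_offdiag (volume.restrict D) measurable_id D] with p hp
      simp only [id] at hp
      rw [dilKer, dilKer, norm_sub_rev p.2 p.1, ← add_div, ← neg_sub p.1 p.2, inner_neg_left,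
        ← sub_eq_add_neg, ← inner_sub_right, real_inner_self_eq_norm_sq]
      exact div_self (by positivity)
    rw [integral_congr_ae this]
    rw [integral_const]
    simp only [Measure.real]
    rw [← univ_prod_univ, Measure.prod_prod]
    simp [sq]
  have hsw : Integrable (fun p : ℂ × ℂ => dilKer p.2 p.1)
      ((volume.restrict D).prod (volume.restrict D)) := hi.swap
  rw [integral_add hi hsw, h1] at h2
  linarith

/-- A Pohozaev-type estimate: if `D` is starshaped, then the second moment of `D` exceeds that of
the disc of the same area by at most the oscillation of the harmonic function `harm D`.
The left-hand side is `-∫_D x · ∇(harm D)`, which is evaluated as a limit of difference quotients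
for the dilations `x ↦ s x`, `s → 1⁺`. -/
lemma second_moment_le {D : Set ℂ} (hb : IsBounded D) (ho : IsOpen D)
    (hstar : ∀ x ∈ D, ∀ t : ℝ, 0 < t → t ≤ 1 → t • x ∈ D) {a η : ℝ}
    (hη : ∀ x ∈ D, |harm D x - a| ≤ η) :
    π * (∫ x in D, ‖x‖ ^ 2) - volume.real D ^ 2 / 2 ≤ 4 * volume.real D * η := by
  have hD := ho.measurableSet
  have : IsFiniteMeasure (volume.restrict D) := ⟨by simpa using hb.measure_lt_top⟩
  set V := volume.real D with hV
  set I := ∫ x in D, ‖x‖ ^ 2 with hI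
  set ν := (volume.restrict D).prod (volume.restrict D) with hν
  obtain ⟨R, hR0, hR⟩ := hb.subset_closedBall_lt 0 (0 : ℂ)
  have hRD : ∀ x ∈ D, ‖x‖ ≤ R := fun x hx => by simpa using hR hx
  have hcont : ∀ {h : ℂ → ℝ}, Continuous h → ∀ {S : Set ℂ}, IsBounded S → IntegrableOn h S := by
    intro h hc S hS
    obtain ⟨r, hr⟩ := hS.subset_closedBall (0 : ℂ)
    exact (hc.continuousOn.integrableOn_compact (isCompact_closedBall 0 r)).mono_set hr
  -- for `s > 1` the quotient is bounded above only; truncating it below by the dominating function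
  -- costs nothing in the limit, and only an upper bound on its integral is needed
  set T : ℝ → ℝ := fun s => ∫ p, max (dilQuot s p.1 p.2) (-(‖p.1‖ * ‖p.1 - p.2‖⁻¹)) ∂ν with hT
  have hlim : Tendsto T (𝓝[>] 1) (𝓝 (V ^ 2 / 2)) := by
    rw [hV, ← integral_dilKer hb hD]
    refine tendsto_integral_filter_of_dominated_convergence
      (fun p : ℂ × ℂ => ‖p.1‖ * ‖p.1 - p.2‖⁻¹)
      (Eventually.of_forall fun t => ?_) ?_ (integrable_dilBound hb hD) ?_
    · exact ((measurable_dilQuot t).max (by fun_prop)).aestronglyMeasurable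
    · filter_upwards [self_mem_nhdsWithin] with t ht
      filter_upwards [ae_offdiag (volume.restrict D) measurable_id D,
        ae_offdiag (volume.restrict D) (X := fun x => t • x) (by fun_prop) D] with p h1 h2
      rw [Real.norm_eq_abs, abs_le]
      exact ⟨le_max_right _ _, max_le (dilQuot_le ht h1 h2)
        (neg_le_self (by positivity))⟩
    · filter_upwards [ae_offdiag (volume.restrict D) measurable_id D] with p h1
      simp only [id] at h1
      have h2 := (tendsto_dilQuot h1).mono_left (nhdsWithin_mono 1 (fun t (ht : 1 < t) => ht.ne'))
      have h3 := h2.max (tendsto_const_nhds (x := -(‖p.1‖ * ‖p.1 - p.2‖⁻¹)))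
      rwa [max_eq_left (abs_le.1 (abs_dilKer_le p.1 p.2)).1] at h3
  -- a Lipschitz-type constant for `harm D` along dilations by `s ∈ (1, 2)`
  set C : ℝ := (V + kerConst) * R + 3 * π / 2 * R ^ 2 with hC
  have hup : ∀ s : ℝ, 1 < s →
      ∫ x in D, (harm D (s • x) - harm D x) ≤ (s - 1) * (T s - π / 2 * (s + 1) * I) := by
    intro s hs
    have hX : Measurable fun x : ℂ => s • x := by fun_prop
    have i1 := integrable_prod_log (volume.restrict D) hX (M := s * R)
      ((ae_restrict_iff' hD).2 (ae_of_all _ fun y hy => by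
        rw [norm_smul, Real.norm_of_nonneg (by linarith)]
        have := hRD y hy
        gcongr)) hb hD
    have i2 := integrable_prod_log (volume.restrict D) measurable_id (M := R)
      ((ae_restrict_iff' hD).2 (ae_of_all _ hRD)) hb hD
    simp only [id] at i2
    have iq : Integrable (fun p : ℂ × ℂ => dilQuot s p.1 p.2) ν := (i1.sub i2).div_const _
    have e1 : ∫ p, dilQuot s p.1 p.2 ∂ν =
        (∫ x in D, (pot D (s • x) - pot D x)) / (s - 1) := by
      simp only [dilQuot]
      rw [integral_div, integral_sub i1 i2, integral_prod _ i1, integral_prod _ i2,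
        ← integral_sub i1.integral_prod_left i2.integral_prod_left]
      rfl
    have e2 : ∫ p, dilQuot s p.1 p.2 ∂ν ≤ T s :=
      integral_mono iq (iq.sup (integrable_dilBound hb hD).neg) fun p => le_max_left _ _
    rw [e1, div_le_iff₀ (by linarith)] at e2
    have e3 : ∀ x : ℂ, harm D (s • x) - harm D x =
        (pot D (s • x) - pot D x) - π / 2 * (s ^ 2 - 1) * ‖x‖ ^ 2 := by
      intro x
      simp only [harm, norm_smul, mul_pow, Real.norm_eq_abs, sq_abs]; ring
    simp_rw [e3]
    rw [integral_sub, integral_const_mul]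
    · rw [← hI]; nlinarith [e2]
    · exact hcont (((continuous_pot hb).comp (by fun_prop)).sub (continuous_pot hb)) hb
    · exact hcont (by fun_prop) hb
  have hdown : ∀ s : ℝ, 1 < s → s < 2 →
      -((s - 1) * ((s + 1) / s ^ 2 * (V * (2 * η + C * (s - 1))))) ≤
        ∫ x in D, (harm D (s • x) - harm D x) := by
    intro s hs hs2
    have hs0 : 0 < s := by linarith
    have hsDb : IsBounded (s • D) := hb.smul₀ s
    have hsub : D ⊆ s • D := by
      intro x hx
      refine ⟨s⁻¹ • x, hstar x hx _ (by positivity) (inv_le_one_of_one_le₀ hs.le), ?_⟩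
      simp [hs0.ne']
    have hh : Continuous fun x => harm D x - a := (continuous_harm hb).sub continuous_const
    have hvol : volume.real (s • D) = s ^ 2 * V := by
      rw [hV, Measure.real, Measure.addHaar_smul, Complex.finrank_real_complex,
        abs_of_pos (by positivity), ENNReal.toReal_mul, ENNReal.toReal_ofReal (by positivity)]
      rfl
    have hdiff : ∀ x ∈ s • D \ D, -(η + C * (s - 1)) ≤ harm D x - a := by
      rintro _ ⟨⟨x, hx, rfl⟩, -⟩
      have h1 := abs_le.1 (hη x hx)
      have h2 := abs_le.1 (abs_pot_sub_le hb (s • x) x)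
      have h3 : s • x - x = (s - 1) • x := by rw [sub_smul, one_smul]
      rw [h3, norm_smul, Real.norm_of_nonneg (by linarith : 0 ≤ s - 1)] at h2
      have hxR := hRD x hx
      have hVk : 0 ≤ volume.real D + kerConst := add_nonneg measureReal_nonneg kerConst_nonneg
      have h4 : (volume.real D + kerConst) * ((s - 1) * ‖x‖)
          ≤ (volume.real D + kerConst) * ((s - 1) * R) := by
        have : 0 ≤ s - 1 := by linarith
        gcongr
      have h5 : π / 2 * ((s ^ 2 - 1) * ‖x‖ ^ 2) ≤ π / 2 * (3 * (s - 1) * R ^ 2) := by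
        have : s ^ 2 - 1 ≤ 3 * (s - 1) := by nlinarith
        have : 0 ≤ s ^ 2 - 1 := by nlinarith
        gcongr
      have h6 : harm D (s • x) = harm D x + (pot D (s • x) - pot D x)
          - π / 2 * ((s ^ 2 - 1) * ‖x‖ ^ 2) := by
        simp only [harm, norm_smul, mul_pow, Real.norm_eq_abs, sq_abs]; ring
      simp only
      rw [h6, hC, hV]
      linarith [h1.1, h2.1]
    have hdm : MeasurableSet (s • D \ D) := (ho.smul₀ hs0.ne').measurableSet.diff hD
    have f1 : ∫ x in s • D, (harm D x - a) =
        (∫ x in D, (harm D x - a)) + ∫ x in s • D \ D, (harm D x - a) := by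
      rw [setIntegral_sdiff hD (hcont hh hsDb) hsub]; ring
    have f2 : -((s ^ 2 - 1) * V * (η + C * (s - 1))) ≤ ∫ x in s • D \ D, (harm D x - a) := by
      have hfin : volume (s • D \ D) ≠ ⊤ := (hsDb.subset sdiff_subset).measure_lt_top.ne
      have := setIntegral_mono_on (integrableOn_const hfin)
        (hcont hh (hsDb.subset sdiff_subset)) hdm hdiff
      refine le_trans (le_of_eq ?_) this
      rw [setIntegral_const, measureReal_sdiff hsub hD hsDb.measure_lt_top.ne, hvol]
      simp only [smul_eq_mul]; ring
    have f3 : ∫ x in D, (harm D x - a) ≤ V * η := by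
      have := setIntegral_mono_on (hcont hh hb) (integrableOn_const hb.measure_lt_top.ne) hD
        (fun x hx => (abs_le.1 (hη x hx)).2)
      refine this.trans (le_of_eq ?_)
      rw [setIntegral_const, smul_eq_mul]
    have f4 : ∫ x in D, (harm D (s • x) - harm D x) =
        (s ^ 2)⁻¹ * (∫ x in s • D, (harm D x - a)) - ∫ x in D, (harm D x - a) := by
      have g1 := Measure.setIntegral_comp_smul_of_pos volume (fun x => harm D x - a) D hs0
      rw [Complex.finrank_real_complex, smul_eq_mul] at g1
      rw [← g1, ← integral_sub]
      · congr 1; ext x; ring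
      · exact hcont (hh.comp (by fun_prop : Continuous fun x : ℂ => s • x)) hb
      · exact hcont hh hb
    rw [f4, f1]
    have k1 : 0 ≤ 1 - (s ^ 2)⁻¹ := by
      have : (s ^ 2)⁻¹ ≤ 1 := inv_le_one_of_one_le₀ (by nlinarith)
      linarith
    have k2 := mul_le_mul_of_nonneg_left f3 k1
    have k3 := mul_le_mul_of_nonneg_left f2 (by positivity : 0 ≤ (s ^ 2)⁻¹)
    have k4 : (s - 1) * ((s + 1) / s ^ 2 * (V * (2 * η + C * (s - 1)))) =
        (1 - (s ^ 2)⁻¹) * (V * η) + (s ^ 2)⁻¹ * ((s ^ 2 - 1) * V * (η + C * (s - 1))) := by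
      field_simp; ring
    rw [k4]
    linarith
  have hkey : ∀ s : ℝ, s ∈ Ioo 1 2 →
      -((s + 1) / s ^ 2 * (V * (2 * η + C * (s - 1)))) ≤ T s - π / 2 * (s + 1) * I := by
    intro s hs
    have h1 := (hdown s hs.1 hs.2).trans (hup s hs.1)
    rw [← mul_neg] at h1
    exact le_of_mul_le_mul_left h1 (by linarith [hs.1])
  have hl1 : Tendsto (fun s : ℝ => -((s + 1) / s ^ 2 * (V * (2 * η + C * (s - 1))))) (𝓝[>] 1)
      (𝓝 (-((1 + 1) / 1 ^ 2 * (V * (2 * η + C * (1 - 1)))))) := by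
    have : ContinuousAt (fun s : ℝ => -((s + 1) / s ^ 2 * (V * (2 * η + C * (s - 1))))) 1 := by
      fun_prop (disch := norm_num)
    exact this.tendsto.mono_left nhdsWithin_le_nhds
  have hl2 : Tendsto (fun s : ℝ => T s - π / 2 * (s + 1) * I) (𝓝[>] 1)
      (𝓝 (V ^ 2 / 2 - π / 2 * (1 + 1) * I)) := by
    refine hlim.sub ?_
    have : ContinuousAt (fun s : ℝ => π / 2 * (s + 1) * I) 1 := by fun_prop
    exact this.tendsto.mono_left nhdsWithin_le_nhds
  have := le_of_tendsto_of_tendsto hl1 hl2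
    (by filter_upwards [Ioo_mem_nhdsGT (one_lt_two : (1 : ℝ) < 2)] with s hs using hkey s hs)
  norm_num at this
  linarith

/-- If a bounded open set fills the disc `B_R` up to a point `x₀` of its boundary circle along the
radius, and the harmonic function `harm D` is maximal at `x₀`, then `D` has full measure in `B_R`:
otherwise the missing mass `B_R \ D` would give `harm D` a negative radial derivative at `x₀`. -/
lemma volume_ball_diff_eq_zero {D : Set ℂ} (ho : IsOpen D) {R : ℝ}
    (hR : 0 < R) (hDR : D ⊆ ball 0 R) {x₀ : ℂ} (hx₀ : ‖x₀‖ = R)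
    (hray : ∀ t : ℝ, 0 < t → t < 1 → t • x₀ ∈ D) (hmax : ∀ x ∈ D, harm D x ≤ harm D x₀) :
    volume (ball 0 R \ D) = 0 := by
  set E : Set ℂ := ball 0 R \ D with hE
  have hEb : IsBounded E := isBounded_ball.subset sdiff_subset
  have hEm : MeasurableSet E := measurableSet_ball.diff ho.measurableSet
  have hpot : ∀ x, pot E x = pot (ball 0 R) x - pot D x := fun x => by
    simp only [pot]
    rw [hE, setIntegral_sdiff ho.measurableSet (integrableOn_log isBounded_ball x) hDR]
  have hbint : IntegrableOn (fun y => ‖x₀‖ * ‖x₀ - y‖⁻¹) E :=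
    (integrableOn_inv hEb.measure_lt_top.ne x₀).const_mul _
  have hneg : ∀ t : ℝ, 0 < t → t < 1 → ∫ y in E, dilQuot t x₀ y ≤ 0 := by
    intro t h0 h1
    have e1 : ∫ y in E, dilQuot t x₀ y = (pot E (t • x₀) - pot E x₀) / (t - 1) := by
      simp only [dilQuot]
      rw [integral_div, integral_sub (integrableOn_log hEb _) (integrableOn_log hEb _)]; rfl
    have hnt : ‖t • x₀‖ ≤ R := by
      rw [norm_smul, Real.norm_of_nonneg h0.le, hx₀]; nlinarith
    have e2 := harm_ball_eq hR hnt hx₀.le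
    have e3 := hmax _ (hray t h0 h1)
    rw [e1, hpot, hpot]
    simp only [harm] at e2 e3
    exact div_nonpos_of_nonneg_of_nonpos (by linarith) (by linarith)
  -- the truncation from above makes dominated convergence applicable and only lowers the integral
  have hlim : Tendsto (fun t : ℝ => ∫ y in E, min (dilQuot t x₀ y) (‖x₀‖ * ‖x₀ - y‖⁻¹))
      (𝓝[<] 1) (𝓝 (∫ y in E, dilKer x₀ y)) := by
    refine tendsto_integral_filter_of_dominated_convergence (fun y => ‖x₀‖ * ‖x₀ - y‖⁻¹)
      (Eventually.of_forall fun t => ?_) ?_ hbint ?_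
    · exact ((measurable_dilQuot_right t x₀).min (by fun_prop)).aestronglyMeasurable
    · filter_upwards [self_mem_nhdsWithin] with t ht
      filter_upwards [ae_ne_pt x₀, ae_ne_pt (t • x₀)] with y h1 h2
      rw [Real.norm_eq_abs, abs_le]
      exact ⟨le_min (le_dilQuot ht h1 h2) (neg_le_self (by positivity)), min_le_right _ _⟩
    · filter_upwards [ae_ne_pt x₀] with y h1
      have h2 := (tendsto_dilQuot h1).mono_left (nhdsWithin_mono 1 (fun t (ht : t < 1) => ht.ne))
      have h3 := h2.min (tendsto_const_nhds (x := ‖x₀‖ * ‖x₀ - y‖⁻¹))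
      rwa [min_eq_left ((le_abs_self _).trans (abs_dilKer_le x₀ y))] at h3
  have hle : ∫ y in E, dilKer x₀ y ≤ 0 := by
    refine le_of_tendsto hlim ?_
    filter_upwards [Ioo_mem_nhdsLT (zero_lt_one' ℝ)] with t ht
    refine le_trans ?_ (hneg t ht.1 ht.2)
    have hq : Integrable (fun y => dilQuot t x₀ y) (volume.restrict E) :=
      ((integrableOn_log hEb (t • x₀)).sub (integrableOn_log hEb x₀)).div_const _
    exact integral_mono (hq.inf hbint) hq fun y => min_le_left _ _
  have hpos : ∀ y ∈ E, 0 < dilKer x₀ y := by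
    intro y hy
    have hyR : ‖y‖ < R := by simpa using hy.1
    have hne : 0 < ‖x₀ - y‖ := by
      have := norm_sub_norm_le x₀ y
      linarith
    refine div_pos ?_ (by positivity)
    rw [inner_sub_left, real_inner_self_eq_norm_sq]
    have := real_inner_le_norm y x₀
    rw [hx₀] at this ⊢
    nlinarith
  have hkint : IntegrableOn (fun y => dilKer x₀ y) E :=
    hbint.mono' (measurable_dilKer_right x₀).aestronglyMeasurable
      (ae_of_all _ fun y => abs_dilKer_le x₀ y)
  by_contra hv
  have h := (setIntegral_pos_iff_support_of_nonneg_ae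
    ((ae_restrict_iff' hEm).2 (ae_of_all _ fun y hy => (hpos y hy).le)) hkint).2 ?_
  · linarith
  · have : (Function.support fun y => dilKer x₀ y) ∩ E = E :=
      inter_eq_self_of_subset_right fun y hy => (hpos y hy).ne'
    rw [this]
    exact pos_iff_ne_zero.2 hv

/-! ### The region enclosed by a polar graph -/

/-- The point of `ℂ` with polar coordinates `(r, θ)`. -/
def cpolar (r θ : ℝ) : ℂ := r * (cos θ + sin θ * Complex.I)

lemma cpolar_eq (r θ : ℝ) : cpolar r θ = r * Complex.exp (θ * Complex.I) := by
  rw [cpolar, Complex.exp_mul_I]; push_cast; rfl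

lemma norm_cpolar {r : ℝ} (hr : 0 ≤ r) (θ : ℝ) : ‖cpolar r θ‖ = r := by
  rw [cpolar_eq, norm_mul, Complex.norm_exp_ofReal_mul_I, Complex.norm_real, Real.norm_of_nonneg hr,
    mul_one]

lemma smul_cpolar (t r θ : ℝ) : t • cpolar r θ = cpolar (t * r) θ := by
  simp [cpolar, mul_assoc]

lemma exists_cpolar (x : ℂ) : ∃ θ : ℝ, x = cpolar ‖x‖ θ :=
  ⟨Complex.arg x, by rw [cpolar_eq, Complex.norm_mul_exp_arg_mul_I]⟩

lemma continuous_cpolar_left (θ : ℝ) : Continuous fun r => cpolar r θ := by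
  unfold cpolar; fun_prop

/-- The angular variable is determined up to a period, so a `2π`-periodic profile is a function of
the point. -/
lemma cpolar_inj {u : ℝ → ℝ} (hu : Function.Periodic u (2 * π)) {r s θ φ : ℝ} (hr : 0 ≤ r)
    (hs : 0 < s) (h : cpolar r θ = cpolar s φ) : r = s ∧ u θ = u φ := by
  have h1 : r = s := by rw [← norm_cpolar hr θ, h, norm_cpolar hs.le]
  refine ⟨h1, ?_⟩
  subst h1
  rw [cpolar_eq, cpolar_eq] at h
  have h2 := mul_left_cancel₀ (by exact_mod_cast hs.ne') h
  obtain ⟨n, hn⟩ := Complex.exp_eq_exp_iff_exists_int.1 h2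
  have h3 : θ = φ + n * (2 * π) := by
    have : ((θ : ℂ)) * Complex.I = (φ + n * (2 * π)) * Complex.I := by rw [hn]; ring
    exact_mod_cast mul_right_cancel₀ Complex.I_ne_zero this
  rw [h3]
  exact hu.int_mul n φ

/-- A connected set that misses the frontier of an open set lies inside or outside of it. -/
lemma subset_of_disjoint_frontier {S D : Set ℂ} (hS : IsPreconnected S) (ho : IsOpen D)
    (hd : ∀ x ∈ S, x ∉ frontier D) {x : ℂ} (hx : x ∈ S) (hxD : x ∈ D) : S ⊆ D := by
  refine hS.subset_left_of_subset_union ho (isClosed_closure (s := D)).isOpen_compl ?_ ?_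
    ⟨x, hx, hxD⟩
  · exact Set.disjoint_compl_right_iff_subset.2 subset_closure
  · intro y hy
    by_cases h : y ∈ closure D
    · left
      by_contra hn
      exact hd y hy (by rw [ho.frontier_eq]; exact ⟨h, hn⟩)
    · exact Or.inr h

/-- A bounded nonempty open set whose frontier is the polar graph of `1 + u` is the region enclosed
by that graph. -/
lemma cpolar_mem_iff {D : Set ℂ} {u : ℝ → ℝ} (hb : IsBounded D) (ho : IsOpen D) (hne : D.Nonempty)
    (hu : Function.Periodic u (2 * π)) (h1 : ∀ θ, -1 < u θ)
    (hfr : frontier D = range fun θ => cpolar (1 + u θ) θ) {r : ℝ} (hr : 0 ≤ r) (θ : ℝ) :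
    cpolar r θ ∈ D ↔ r < 1 + u θ := by
  have hnf : ∀ {s φ : ℝ}, 0 ≤ s → s ≠ 1 + u φ → cpolar s φ ∉ frontier D := by
    intro s φ hs hne hmem
    rw [hfr] at hmem
    obtain ⟨ψ, hψ⟩ := hmem
    have := cpolar_inj hu hs (by linarith [h1 ψ]) hψ.symm
    exact hne (by rw [this.1, this.2])
  have hout : ∀ {s φ : ℝ}, 1 + u φ ≤ s → cpolar s φ ∉ D := by
    intro s φ hs hmem
    rcases hs.eq_or_lt with rfl | hs
    · have : cpolar (1 + u φ) φ ∈ frontier D := by rw [hfr]; exact ⟨φ, rfl⟩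
      rw [ho.frontier_eq] at this
      exact this.2 hmem
    obtain ⟨R, hR⟩ := hb.exists_norm_le
    have hsub := subset_of_disjoint_frontier
      ((isPreconnected_Ioi (a := 1 + u φ)).image _ (continuous_cpolar_left φ).continuousOn) ho
      (by
        rintro _ ⟨t, ht, rfl⟩
        exact hnf (by linarith [h1 φ, mem_Ioi.1 ht]) (ne_of_gt ht))
      (mem_image_of_mem _ hs) hmem
    have hs' : s < max s R + 1 := by linarith [le_max_left s R]
    have := hR _ (hsub (mem_image_of_mem _ (hs.trans hs' : max s R + 1 ∈ Ioi (1 + u φ))))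
    rw [norm_cpolar (by linarith [h1 φ])] at this
    linarith [le_max_right s R]
  have hin : ∀ φ, IsPreconnected ((fun t => cpolar t φ) '' Ico 0 (1 + u φ)) ∧
      ∀ x ∈ (fun t => cpolar t φ) '' Ico 0 (1 + u φ), x ∉ frontier D := by
    intro φ
    refine ⟨isPreconnected_Ico.image _ (continuous_cpolar_left φ).continuousOn, ?_⟩
    rintro _ ⟨t, ht, rfl⟩
    exact hnf ht.1 ht.2.ne
  have hz : ∀ φ, cpolar 0 φ = 0 := by simp [cpolar]
  have h0 : (0 : ℂ) ∈ D := by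
    obtain ⟨x, hx⟩ := hne
    obtain ⟨φ, hφ⟩ := exists_cpolar x
    have hlt : ‖x‖ < 1 + u φ := by
      by_contra hcon
      exact hout (not_lt.1 hcon) (hφ ▸ hx)
    have := subset_of_disjoint_frontier (hin φ).1 ho (hin φ).2
      (mem_image_of_mem _ (⟨norm_nonneg x, hlt⟩ : ‖x‖ ∈ Ico 0 (1 + u φ))) (hφ ▸ hx)
    have h2 := this (mem_image_of_mem _ (⟨le_rfl, by linarith [h1 φ]⟩ : (0:ℝ) ∈ Ico 0 (1 + u φ)))
    simpa [hz] using h2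
  refine ⟨fun h => ?_, fun h => ?_⟩
  · by_contra hcon
    exact hout (not_lt.1 hcon) h
  · exact subset_of_disjoint_frontier (hin θ).1 ho (hin θ).2
      (mem_image_of_mem _ (⟨le_rfl, by linarith [h1 θ]⟩ : (0:ℝ) ∈ Ico 0 (1 + u θ)))
      (by simpa [hz] using h0) (mem_image_of_mem _ ⟨hr, h⟩)

/-- Radial moments of the region `{r < 1 + u(θ)}`. -/
lemma integral_norm_pow {D : Set ℂ} {u : ℝ → ℝ} (ho : IsOpen D) (hc : Continuous u)
    (h1 : ∀ θ, -1 < u θ) (h2 : ∀ θ, u θ ≤ 1)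
    (hmem : ∀ {r : ℝ}, 0 ≤ r → ∀ θ, cpolar r θ ∈ D ↔ r < 1 + u θ) (n : ℕ) :
    ∫ x in D, ‖x‖ ^ n = ∫ θ in (-π)..π, (1 + u θ) ^ (n + 2) / (n + 2) := by
  set S : Set (ℝ × ℝ) := {p | p.1 < 1 + u p.2} with hS
  have hSm : MeasurableSet S := (isOpen_lt (by fun_prop) (by fun_prop)).measurableSet
  rw [← integral_indicator ho.measurableSet, ← Complex.integral_comp_polarCoord_symm,
    polarCoord_target]
  have e1 : ∫ p in Ioi (0 : ℝ) ×ˢ Ioo (-π) π,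
      p.1 • D.indicator (fun x => ‖x‖ ^ n) (Complex.polarCoord.symm p) =
      ∫ p in Ioi (0 : ℝ) ×ˢ Ioo (-π) π, S.indicator (fun p => p.1 ^ (n + 1)) p := by
    refine setIntegral_congr_fun (measurableSet_Ioi.prod measurableSet_Ioo) fun p hp => ?_
    have hp0 : 0 ≤ p.1 := le_of_lt hp.1
    have e : Complex.polarCoord.symm p = cpolar p.1 p.2 := Complex.polarCoord_symm_apply p
    simp only [indicator, e, hmem hp0, hS, mem_ofPred_eq, norm_cpolar hp0, smul_eq_mul]
    split_ifs <;> ring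
  have hinteg : IntegrableOn (S.indicator fun p => p.1 ^ (n + 1)) (Ioi (0 : ℝ) ×ˢ Ioo (-π) π)
      ((volume : Measure ℝ).prod volume) := by
    rw [IntegrableOn, integrable_indicator_iff hSm, IntegrableOn, Measure.restrict_restrict hSm]
    have hK : IsCompact (Icc (0 : ℝ) 2 ×ˢ Icc (-π) π) := isCompact_Icc.prod isCompact_Icc
    refine IntegrableOn.mono_set (t := Icc (0 : ℝ) 2 ×ˢ Icc (-π) π)
      (ContinuousOn.integrableOn_compact hK (by fun_prop)) ?_
    rintro p ⟨hp, hp1, hp2⟩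
    have := h2 p.2
    simp only [hS, mem_ofPred_eq] at hp
    exact ⟨⟨le_of_lt hp1, by linarith⟩, Ioo_subset_Icc_self hp2⟩
  rw [e1, Measure.volume_eq_prod, ← Measure.prod_restrict]
  rw [IntegrableOn, ← Measure.prod_restrict] at hinteg
  rw [integral_prod_symm _ hinteg, intervalIntegral.integral_of_le (by linarith [pi_pos]),
    integral_Ioc_eq_integral_Ioo]
  refine setIntegral_congr_fun measurableSet_Ioo fun θ _ => ?_
  have e2 : ∀ r : ℝ, S.indicator (fun p : ℝ × ℝ => p.1 ^ (n + 1)) (r, θ) =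
      (Iio (1 + u θ)).indicator (fun r => r ^ (n + 1)) r := fun r => by
    simp [indicator, hS]
  simp only [e2]
  rw [setIntegral_indicator measurableSet_Iio, Ioi_inter_Iio, ← integral_Ioc_eq_integral_Ioo,
    ← intervalIntegral.integral_of_le (by linarith [h1 θ]), integral_pow]
  push_cast
  simp; ring

/-! ### The estimate in the complex plane -/

/-- If `u ≤ 0` and the region enclosed by the graph of `1 + u` has area `π`, then `u = 0`. -/
lemma profile_eq_zero_of_nonpos {u : ℝ → ℝ} (hc : Continuous u) (hu : Function.Periodic u (2 * π))
    (h1 : ∀ θ, -1 < u θ) (h0 : ∀ θ, u θ ≤ 0)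
    (harea : ∫ θ in (-π)..π, (1 + u θ) ^ 2 / 2 = π) : u = 0 := by
  by_contra hne
  obtain ⟨θ₁, hθ₁⟩ := Function.ne_iff.1 hne
  obtain ⟨θ, hθ, he⟩ := hu.exists_mem_Ioc (by positivity) θ₁ (-π)
  have hneg : u θ < 0 := lt_of_le_of_ne (h0 θ) (by rw [← he]; exact hθ₁)
  have hpos : 0 < ∫ θ in (-π)..π, (1 / 2 - (1 + u θ) ^ 2 / 2) := by
    refine intervalIntegral.integral_pos (by linarith [pi_pos]) (by fun_prop) (fun x _ => ?_)
      ⟨θ, ⟨hθ.1.le, by linarith [hθ.2]⟩, ?_⟩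
    · nlinarith [h0 x, h1 x]
    · nlinarith [h1 θ]
  rw [intervalIntegral.integral_sub (by simp) ((by fun_prop : Continuous fun θ =>
    (1 + u θ) ^ 2 / 2).intervalIntegrable _ _), harea, intervalIntegral.integral_const] at hpos
  simp only [smul_eq_mul] at hpos
  linarith

/-- The estimate for a patch in the complex plane. The boundary condition is that
`pot D = c + πΩ|x|²` on the boundary. -/
lemma complex_bound {D : Set ℂ} {u : ℝ → ℝ} {M Ω c : ℝ} (hb : IsBounded D) (ho : IsOpen D)
    (hvol : volume.real D = π) (hc : Continuous u) (hu : Function.Periodic u (2 * π))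
    (hM : ∀ θ, |u θ| ≤ M) (hM2 : M ≤ 1 / 2) (hu0 : u ≠ 0)
    (hfr : frontier D = range fun θ => cpolar (1 + u θ) θ)
    (hpot : ∀ x ∈ frontier D, pot D x = c + π * Ω * ‖x‖ ^ 2) :
    0 < 1 / 2 - Ω ∧ ∫ θ in (0 : ℝ)..(2 * π), u θ ^ 2 ≤ 50 * (1 / 2 - Ω) * M := by
  have hlo : ∀ θ, -M ≤ u θ := fun θ => (abs_le.1 (hM θ)).1
  have hhi : ∀ θ, u θ ≤ M := fun θ => (abs_le.1 (hM θ)).2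
  have hM0 : 0 ≤ M := (abs_nonneg _).trans (hM 0)
  have h1 : ∀ θ, -1 < u θ := fun θ => by linarith [hlo θ]
  have hne : D.Nonempty := by
    by_contra h
    rw [not_nonempty_iff_eq_empty] at h
    rw [h] at hvol
    simp at hvol
    exact pi_pos.ne hvol
  have hmem : ∀ {r : ℝ}, 0 ≤ r → ∀ θ, cpolar r θ ∈ D ↔ r < 1 + u θ :=
    fun hr θ => cpolar_mem_iff hb ho hne hu h1 hfr hr θ
  have harea : ∫ θ in (-π)..π, (1 + u θ) ^ 2 / 2 = π := by
    have := integral_norm_pow ho hc h1 (fun θ => by linarith [hhi θ]) hmem 0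
    simp only [pow_zero, setIntegral_const, hvol, smul_eq_mul, mul_one, zero_add,
      Nat.cast_zero] at this
    exact this.symm
  have hmom : ∫ x in D, ‖x‖ ^ 2 = ∫ θ in (-π)..π, (1 + u θ) ^ 4 / 4 := by
    rw [integral_norm_pow ho hc h1 (fun θ => by linarith [hhi θ]) hmem 2]
    norm_num
  have hstar : ∀ x ∈ D, ∀ t : ℝ, 0 < t → t ≤ 1 → t • x ∈ D := by
    intro x hx t ht ht1
    obtain ⟨θ, hθ⟩ := exists_cpolar x
    have hx' : cpolar ‖x‖ θ ∈ D := hθ ▸ hx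
    rw [hmem (norm_nonneg x)] at hx'
    rw [hθ, smul_cpolar, hmem (by positivity)]
    nlinarith [norm_nonneg x]
  have hharm : ∀ x ∈ frontier D, harm D x = c - π * (1 / 2 - Ω) * ‖x‖ ^ 2 := fun x hx => by
    rw [harm, hpot x hx]; ring
  have hκ : 0 < 1 / 2 - Ω := by
    by_contra hκ
    -- otherwise the maximum of `harm D` is attained at the boundary point furthest from the origin
    obtain ⟨θ₀, -, hθ₀⟩ := (isCompact_Icc (a := -π) (b := π)).exists_isMaxOn
      (nonempty_Icc.2 (by linarith [pi_pos])) hc.continuousOn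
    have hmax : ∀ θ, u θ ≤ u θ₀ := by
      intro θ
      obtain ⟨φ, hφ, he⟩ := hu.exists_mem_Ioc (by positivity) θ (-π)
      rw [he]
      exact hθ₀ ⟨hφ.1.le, by linarith [hφ.2]⟩
    have hR : 0 < 1 + u θ₀ := by linarith [h1 θ₀]
    have hx₀ : cpolar (1 + u θ₀) θ₀ ∈ frontier D := by rw [hfr]; exact ⟨θ₀, rfl⟩
    have hDR : D ⊆ ball 0 (1 + u θ₀) := by
      intro x hx
      obtain ⟨θ, hθ⟩ := exists_cpolar x
      have hx' : cpolar ‖x‖ θ ∈ D := hθ ▸ hx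
      rw [hmem (norm_nonneg x)] at hx'
      rw [mem_ball_zero_iff]
      linarith [hmax θ]
    have hle : ∀ x ∈ D, harm D x ≤ harm D (cpolar (1 + u θ₀) θ₀) := by
      refine harm_le hb ho fun x hx => ?_
      rw [hharm x hx, hharm _ hx₀, norm_cpolar hR.le]
      rw [hfr] at hx
      obtain ⟨θ, rfl⟩ := hx
      have h3 : 0 ≤ 1 + u θ := by linarith [h1 θ]
      simp only [norm_cpolar h3]
      have h4 : (1 + u θ) ^ 2 ≤ (1 + u θ₀) ^ 2 := by
        have := hmax θ
        gcongr
      have h5 : π * (1 / 2 - Ω) ≤ 0 := mul_nonpos_of_nonneg_of_nonpos pi_pos.le (not_lt.1 hκ)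
      nlinarith
    have hz := volume_ball_diff_eq_zero ho hR hDR (norm_cpolar hR.le θ₀)
      (fun t ht ht1 => by
        rw [smul_cpolar, hmem (by positivity)]
        nlinarith) hle
    have hvb : volume.real (ball (0 : ℂ) (1 + u θ₀)) = π := by
      have := measureReal_sdiff (μ := volume) hDR ho.measurableSet
        isBounded_ball.measure_lt_top.ne
      rw [Measure.real, hz, hvol] at this
      simp only [ENNReal.toReal_zero] at this
      linarith
    have hR1 : (1 + u θ₀) ^ 2 = 1 := by
      rw [Measure.real, Complex.volume_ball] at hvb
      simp only [ENNReal.toReal_mul, ENNReal.toReal_pow, ENNReal.toReal_ofReal hR.le,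
        ENNReal.coe_toReal, NNReal.coe_real_pi] at hvb
      exact mul_right_cancel₀ pi_pos.ne' (by rw [hvb, one_mul])
    have hu1 : u θ₀ = 0 := by nlinarith
    exact hu0 (profile_eq_zero_of_nonpos hc hu h1 (fun θ => hu1 ▸ hmax θ) harea)
  refine ⟨hκ, ?_⟩
  have hπκ : 0 ≤ π * (1 / 2 - Ω) := mul_nonneg pi_pos.le hκ.le
  have hnorm : ∀ x ∈ frontier D, 1 - M ≤ ‖x‖ ∧ ‖x‖ ≤ 1 + M := by
    rw [hfr]
    rintro _ ⟨θ, rfl⟩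
    have h3 : 0 ≤ 1 + u θ := by linarith [h1 θ]
    simp only [norm_cpolar h3]
    exact ⟨by linarith [hlo θ], by linarith [hhi θ]⟩
  have hup := harm_le hb ho (M := c - π * (1 / 2 - Ω) * (1 - M) ^ 2) fun x hx => by
    rw [hharm x hx]
    have := (hnorm x hx).1
    have h5 : 0 ≤ 1 - M := by linarith
    gcongr
  have hdn := le_harm hb ho (M := c - π * (1 / 2 - Ω) * (1 + M) ^ 2) fun x hx => by
    rw [hharm x hx]
    have := (hnorm x hx).2
    gcongr
  have hsm := second_moment_le hb ho hstar (a := c - π * (1 / 2 - Ω) * (1 + M ^ 2))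
    (η := 2 * π * (1 / 2 - Ω) * M) fun x hx => by
      rw [abs_le]
      constructor <;> linarith [hup x hx, hdn x hx]
  rw [hvol] at hsm
  have hA : (∫ x in D, ‖x‖ ^ 2) - π / 2 ≤ 8 * π * (1 / 2 - Ω) * M := by
    refine le_of_mul_le_mul_left ?_ pi_pos
    linarith
  have hii : ∀ {f : ℝ → ℝ}, Continuous f → IntervalIntegrable f volume (-π) π :=
    fun hf => hf.intervalIntegrable _ _
  -- the second moment minus `π / 2` is `¼ ∫ u² (2 + u)²`, because the area is `π`
  have hlow : ∫ θ in (-π)..π, 9 / 16 * u θ ^ 2 ≤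
      ∫ θ in (-π)..π, ((1 + u θ) ^ 4 / 4 - (1 + u θ) ^ 2 / 2 + 1 / 4) := by
    refine intervalIntegral.integral_mono_on (by linarith [pi_pos]) (hii (by fun_prop))
      (hii (by fun_prop)) fun θ _ => ?_
    have e : (1 + u θ) ^ 4 / 4 - (1 + u θ) ^ 2 / 2 + 1 / 4 = (2 + u θ) ^ 2 / 4 * u θ ^ 2 := by ring
    rw [e]
    have : 9 / 16 ≤ (2 + u θ) ^ 2 / 4 := by nlinarith [hlo θ]
    gcongr
  rw [intervalIntegral.integral_add (hii (by fun_prop)) (hii (by fun_prop)),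
    intervalIntegral.integral_sub (hii (by fun_prop)) (hii (by fun_prop)), harea, ← hmom,
    intervalIntegral.integral_const, intervalIntegral.integral_const_mul, smul_eq_mul] at hlow
  have hper : ∫ θ in (0 : ℝ)..(2 * π), u θ ^ 2 = ∫ θ in (-π)..π, u θ ^ 2 := by
    have hp : Function.Periodic (fun θ => u θ ^ 2) (2 * π) := fun θ => by
      simp only [hu θ]
    have := hp.intervalIntegral_add_eq 0 (-π)
    rw [zero_add, show -π + 2 * π = π by ring] at this
    exact this
  rw [hper]
  have hπ : π * ((1 / 2 - Ω) * M) ≤ 3.15 * ((1 / 2 - Ω) * M) :=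
    mul_le_mul_of_nonneg_right pi_lt_d2.le (mul_nonneg hκ.le hM0)
  have : 0 ≤ (1 / 2 - Ω) * M := mul_nonneg hκ.le hM0
  linarith

/-! ### Transfer from the complex plane -/

/-- The standard isometry from `ℂ` to the plane. -/
def planeIso : ℂ ≃ₗᵢ[ℝ] R2 := Complex.orthonormalBasisOneI.repr

lemma planeIso_cpolar (r θ : ℝ) : planeIso (cpolar r θ) = polar r θ := by
  ext i
  simp only [planeIso, Complex.orthonormalBasisOneI_repr_apply, polar, pt, cpolar]
  fin_cases i <;> simp [-Complex.ofReal_cos, -Complex.ofReal_sin]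

lemma measurePreserving_planeIso : MeasurePreserving planeIso :=
  Complex.orthonormalBasisOneI.measurePreserving_repr

lemma patchConv_planeIso (D : Set R2) (x : ℂ) :
    patchConv D (planeIso x) = 1 / (2 * π) * pot (planeIso ⁻¹' D) x := by
  rw [patchConv, pot, ← measurePreserving_planeIso.setIntegral_preimage_emb
    planeIso.toHomeomorph.measurableEmbedding, ← integral_const_mul]
  simp only [nker, ← map_sub, LinearIsometryEquiv.norm_map]

end Aux

/-- A lower bound for `1/2 − Ω` for star-shaped `m`-fold symmetric
patches in terms of `‖u‖_{L²}²/(r_max ‖u‖_{L∞})`. -/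
theorem lambda_lower_bound :
    ∃ C > (0 : ℝ), ∀ (m : ℕ), 3 ≤ m → ∀ (D : Set R2) (Ω : ℝ) (u : ℝ → ℝ),
      IsPatchSolution D Ω → volume D = ENNReal.ofReal π →
      ContDiff ℝ 2 u → (∀ θ : ℝ, -1 < u θ) →
      (∀ θ : ℝ, u (-θ) = u θ) → Function.Periodic u (2 * π / m) →
      (∀ θ ∈ Set.Ioo (0 : ℝ) (π / m), deriv u θ < 0) →
      u ≠ 0 → supNorm u ≤ 1/2 →
      frontier D = polarGraph u →
      1/2 - Ω ≥ C * (∫ θ in (0 : ℝ)..(2 * π), (u θ) ^ 2) / ((1 + u 0) * supNorm u) := by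
  refine ⟨1 / 100, by norm_num, ?_⟩
  rintro m hm D Ω u ⟨ho, hb, -, -, c, hc⟩ hvol hu2 - - hper - hu0 hsup hfr
  have hcu : Continuous u := hu2.continuous
  have hper2 : Function.Periodic u (2 * π) := by
    have h := hper.nat_mul m
    rwa [mul_div_cancel₀ _ (by positivity : (m : ℝ) ≠ 0)] at h
  have hbdd : BddAbove (range fun θ => |u θ|) :=
    (hper2.comp fun x => |x|).compact_of_continuous (by positivity) hcu.abs |>.bddAbove
  have hM : ∀ θ, |u θ| ≤ supNorm u := fun θ => le_ciSup hbdd θ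
  have hMpos : 0 < supNorm u := by
    obtain ⟨θ, hθ⟩ := Function.ne_iff.1 hu0
    exact (abs_pos.2 hθ).trans_le (hM θ)
  have hfr' : frontier (planeIso ⁻¹' D) = planeIso ⁻¹' frontier D :=
    (planeIso.toHomeomorph.preimage_frontier D).symm
  obtain ⟨hκ, hbound⟩ := complex_bound (D := planeIso ⁻¹' D) (u := u) (M := supNorm u) (Ω := Ω)
    (c := 2 * π * c) (planeIso.antilipschitz.isBounded_preimage hb)
    (ho.preimage planeIso.continuous)
    (by
      rw [Measure.real, measurePreserving_planeIso.measure_preimage ho.measurableSet.nullMeasurableSet,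
        hvol, ENNReal.toReal_ofReal pi_pos.le])
    hcu hper2 hM hsup hu0
    (by
      rw [hfr', hfr]
      ext x
      simp only [polarGraph, mem_preimage, mem_ofPred_eq, mem_range, ← planeIso_cpolar,
        planeIso.injective.eq_iff, eq_comm])
    (by
      intro x hx
      rw [hfr'] at hx
      have h := hc _ hx
      rw [streamFun, patchConv_planeIso, LinearIsometryEquiv.norm_map] at h
      have h2 := congrArg (fun y => 2 * π * y) h
      simp only [mul_sub] at h2
      rw [← mul_assoc, mul_one_div_cancel (by positivity), one_mul] at h2
      linarith)
  -- `1 + u 0 ≥ 1/2` together with the factor `50` gives the constant `1 / 100`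
  have h10 : 1 / 2 ≤ 1 + u 0 := by linarith [(abs_le.1 (hM 0)).1]
  rw [ge_iff_le, div_le_iff₀ (by positivity)]
  have h3 : (1 / 2 - Ω) * (1 / 2 * supNorm u) ≤ (1 / 2 - Ω) * ((1 + u 0) * supNorm u) := by
    gcongr
  linarith
end
end
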